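/- arXiv:1207.4511 — 3 statements merged into one kernel-verified Lean document; each statement's English description precedes it below -/
import Mathlib

section
/- A Banach algebra A is approximately amenable if and only if it is weak* approximately amenable. -/
open Filter Topology TensorProduct

noncomputable section


open Filter Topology TensorProduct


/-! Banach bimodules and derivations -/

variable (A : Type) [NonUnitalNormedRing A] [NormedSpace ℂ A]
  [IsScalarTower ℂ A A] [SMulCommClass ℂ A A]

/-- A Banach `A`-bimodule structure on a Banach space `X`: `l a` is the left action of `a`,
`r a` is the right action of `a`. -/
structure BanachBimod (X : Type) [NormedAddCommGroup X] [NormedSpace ℂ X] where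
  l : A → X →L[ℂ] X
  r : A → X →L[ℂ] X
  l_add : ∀ a b, l (a + b) = l a + l b
  l_smul : ∀ (c : ℂ) a, l (c • a) = c • l a
  r_add : ∀ a b, r (a + b) = r a + r b
  r_smul : ∀ (c : ℂ) a, r (c • a) = c • r a
  l_bound : ∃ C : ℝ, ∀ a, ‖l a‖ ≤ C * ‖a‖
  r_bound : ∃ C : ℝ, ∀ a, ‖r a‖ ≤ C * ‖a‖
  l_mul : ∀ a b, l (a * b) = (l a).comp (l b)
  r_mul : ∀ a b, r (a * b) = (r b).comp (r a)
  lr_comm : ∀ a b, (l a).comp (r b) = (r b).comp (l a)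

variable {A}

namespace BanachBimod

variable {X : Type} [NormedAddCommGroup X] [NormedSpace ℂ X]

/-- The dual bimodule structure on `X →L[ℂ] ℂ`. -/
def dual (M : BanachBimod A X) : BanachBimod A (X →L[ℂ] ℂ) where
  l a := (ContinuousLinearMap.compL ℂ X X ℂ).flip (M.r a)
  r a := (ContinuousLinearMap.compL ℂ X X ℂ).flip (M.l a)
  l_add a b := by simp only [M.r_add, map_add]
  l_smul c a := by simp only [M.r_smul, map_smul]
  r_add a b := by simp only [M.l_add, map_add]
  r_smul c a := by simp only [M.l_smul, map_smul]
  l_bound := by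
    obtain ⟨C, hC⟩ := M.r_bound
    refine ⟨‖(ContinuousLinearMap.compL ℂ X X ℂ).flip‖ * C, fun a => ?_⟩
    calc ‖(ContinuousLinearMap.compL ℂ X X ℂ).flip (M.r a)‖
        ≤ ‖(ContinuousLinearMap.compL ℂ X X ℂ).flip‖ * ‖M.r a‖ :=
          (ContinuousLinearMap.compL ℂ X X ℂ).flip.le_opNorm _
      _ ≤ ‖(ContinuousLinearMap.compL ℂ X X ℂ).flip‖ * (C * ‖a‖) := by
          exact mul_le_mul_of_nonneg_left (hC a) (norm_nonneg _)
      _ = ‖(ContinuousLinearMap.compL ℂ X X ℂ).flip‖ * C * ‖a‖ := by ring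
  r_bound := by
    obtain ⟨C, hC⟩ := M.l_bound
    refine ⟨‖(ContinuousLinearMap.compL ℂ X X ℂ).flip‖ * C, fun a => ?_⟩
    calc ‖(ContinuousLinearMap.compL ℂ X X ℂ).flip (M.l a)‖
        ≤ ‖(ContinuousLinearMap.compL ℂ X X ℂ).flip‖ * ‖M.l a‖ :=
          (ContinuousLinearMap.compL ℂ X X ℂ).flip.le_opNorm _
      _ ≤ ‖(ContinuousLinearMap.compL ℂ X X ℂ).flip‖ * (C * ‖a‖) := by
          exact mul_le_mul_of_nonneg_left (hC a) (norm_nonneg _)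
      _ = ‖(ContinuousLinearMap.compL ℂ X X ℂ).flip‖ * C * ‖a‖ := by ring
  l_mul a b := by
    ext φ x
    simp [M.r_mul]
  r_mul a b := by
    ext φ x
    simp [M.l_mul]
  lr_comm a b := by
    ext φ x
    simpa using congrArg φ (congrFun (congrArg DFunLike.coe (M.lr_comm b a)) x)

/-- A continuous derivation from `A` into the bimodule `X`. -/
def IsDerivation (M : BanachBimod A X) (D : A →L[ℂ] X) : Prop :=
  ∀ a b, D (a * b) = M.l a (D b) + M.r b (D a)

/-- `D` is inner. -/
def Inner (M : BanachBimod A X) (D : A →L[ℂ] X) : Prop :=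
  ∃ x : X, ∀ a, D a = M.l a x - M.r a x

/-- `D` is approximately inner: some net of inner derivations converges to `D` pointwise
in norm. -/
def ApproxInner (M : BanachBimod A X) (D : A →L[ℂ] X) : Prop :=
  ∃ (ι : Type) (φ : Filter ι) (x : ι → X), φ.NeBot ∧
    ∀ a, Tendsto (fun i => M.l a (x i) - M.r a (x i)) φ (𝓝 (D a))

/-- `D` is sequentially approximately inner. -/
def SeqApproxInner (M : BanachBimod A X) (D : A →L[ℂ] X) : Prop :=
  ∃ x : ℕ → X, ∀ a, Tendsto (fun n => M.l a (x n) - M.r a (x n)) atTop (𝓝 (D a))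

/-- `D` is boundedly approximately inner: the approximating net of inner derivations is
bounded as a net of operators from `A` to `X`. -/
def BddApproxInner (M : BanachBimod A X) (D : A →L[ℂ] X) : Prop :=
  ∃ (ι : Type) (φ : Filter ι) (x : ι → X), φ.NeBot ∧
    (∃ C : ℝ, ∀ i a, ‖M.l a (x i) - M.r a (x i)‖ ≤ C * ‖a‖) ∧
    ∀ a, Tendsto (fun i => M.l a (x i) - M.r a (x i)) φ (𝓝 (D a))

/-- `D` is uniformly approximately inner: inner derivations approximate `D` uniformly
on the unit ball of `A`, i.e. in operator norm. -/
def UnifApproxInner (M : BanachBimod A X) (D : A →L[ℂ] X) : Prop :=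
  ∃ (ι : Type) (φ : Filter ι) (x : ι → X), φ.NeBot ∧
    ∀ ε > (0 : ℝ), ∀ᶠ i in φ, ∀ a, ‖D a - (M.l a (x i) - M.r a (x i))‖ ≤ ε * ‖a‖

/-- A derivation into the dual module `X →L[ℂ] ℂ` is weak* approximately inner. -/
def WeakStarApproxInner (M : BanachBimod A X) (D : A →L[ℂ] (X →L[ℂ] ℂ)) : Prop :=
  ∃ (ι : Type) (φ : Filter ι) (x : ι → (X →L[ℂ] ℂ)), φ.NeBot ∧
    ∀ (a : A) (ξ : X),
      Tendsto (fun i => (M.dual.l a (x i) - M.dual.r a (x i)) ξ) φ (𝓝 (D a ξ))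

end BanachBimod

variable (A)

/-- `A` is contractible: every continuous derivation into every Banach `A`-bimodule is inner. -/
def Contractible : Prop :=
  ∀ (X : Type) (_ : NormedAddCommGroup X) (_ : NormedSpace ℂ X) (M : BanachBimod A X)
    (D : A →L[ℂ] X), M.IsDerivation D → M.Inner D

def ApproximatelyContractible : Prop :=
  ∀ (X : Type) (_ : NormedAddCommGroup X) (_ : NormedSpace ℂ X) (M : BanachBimod A X)
    (D : A →L[ℂ] X), M.IsDerivation D → M.ApproxInner D

def SeqApproximatelyContractible : Prop :=
  ∀ (X : Type) (_ : NormedAddCommGroup X) (_ : NormedSpace ℂ X) (M : BanachBimod A X)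
    (D : A →L[ℂ] X), M.IsDerivation D → M.SeqApproxInner D

def UnifApproximatelyContractible : Prop :=
  ∀ (X : Type) (_ : NormedAddCommGroup X) (_ : NormedSpace ℂ X) (M : BanachBimod A X)
    (D : A →L[ℂ] X), M.IsDerivation D → M.UnifApproxInner D

def ApproximatelyAmenable : Prop :=
  ∀ (X : Type) (_ : NormedAddCommGroup X) (_ : NormedSpace ℂ X) (M : BanachBimod A X)
    (D : A →L[ℂ] (X →L[ℂ] ℂ)), M.dual.IsDerivation D → M.dual.ApproxInner D

def SeqApproximatelyAmenable : Prop :=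
  ∀ (X : Type) (_ : NormedAddCommGroup X) (_ : NormedSpace ℂ X) (M : BanachBimod A X)
    (D : A →L[ℂ] (X →L[ℂ] ℂ)), M.dual.IsDerivation D → M.dual.SeqApproxInner D

def BddApproximatelyAmenable : Prop :=
  ∀ (X : Type) (_ : NormedAddCommGroup X) (_ : NormedSpace ℂ X) (M : BanachBimod A X)
    (D : A →L[ℂ] (X →L[ℂ] ℂ)), M.dual.IsDerivation D → M.dual.BddApproxInner D

def WeakStarApproximatelyAmenable : Prop :=
  ∀ (X : Type) (_ : NormedAddCommGroup X) (_ : NormedSpace ℂ X) (M : BanachBimod A X)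
    (D : A →L[ℂ] (X →L[ℂ] ℂ)), M.dual.IsDerivation D → M.WeakStarApproxInner D


/-- The projective tensor "seminorm" on the algebraic tensor product `V ⊗[ℂ] W`, relative to
given (semi)norm functions on the factors: the infimum of `∑ να aₙ * νβ bₙ` over all
representations `t = ∑ aₙ ⊗ bₙ`. -/
def projTensorSN {V W : Type} [AddCommGroup V] [Module ℂ V] [AddCommGroup W] [Module ℂ W]
    (να : V → ℝ) (νβ : W → ℝ) (t : V ⊗[ℂ] W) : ℝ :=
  sInf {r : ℝ | ∃ L : List (V × W), t = (L.map fun p => p.1 ⊗ₜ[ℂ] p.2).sum ∧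
      r = (L.map fun p => να p.1 * νβ p.2).sum}

section SN

variable (C : Type) [NonUnitalRing C] [Module ℂ C] [IsScalarTower ℂ C C] [SMulCommClass ℂ C C]

/-- The left action `u ↦ a·u` of `C` on `C ⊗[ℂ] C`. -/
def tactL (a : C) : C ⊗[ℂ] C →ₗ[ℂ] C ⊗[ℂ] C :=
  TensorProduct.map (LinearMap.mulLeft ℂ a) LinearMap.id

/-- The right action `u ↦ u·a` of `C` on `C ⊗[ℂ] C`. -/
def tactR (a : C) : C ⊗[ℂ] C →ₗ[ℂ] C ⊗[ℂ] C :=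
  TensorProduct.map LinearMap.id (LinearMap.mulRight ℂ a)

/-- The multiplication map `π : C ⊗ C → C`. -/
def tpi : C ⊗[ℂ] C →ₗ[ℂ] C := LinearMap.mul' ℂ C

variable (ν : C → ℝ)

/-- Pseudo-amenability of the algebra `C` relative to the (semi)norm function `ν`:
there is an approximate diagonal, i.e. a net `(u_i) ⊂ C ⊗̂ C` with
`a·u_i − u_i·a → 0` (in the projective tensor seminorm) and `π(u_i)a → a` for all `a ∈ C`. -/
def PseudoAmenableSN : Prop :=
  ∃ (ι : Type) (φ : Filter ι) (u : ι → C ⊗[ℂ] C), φ.NeBot ∧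
    (∀ a : C, Tendsto (fun i => projTensorSN ν ν (tactL C a (u i) - tactR C a (u i))) φ (𝓝 0)) ∧
    (∀ a : C, Tendsto (fun i => ν (tpi C (u i) * a - a)) φ (𝓝 0))

/-- Sequential pseudo-amenability. -/
def SeqPseudoAmenableSN : Prop :=
  ∃ u : ℕ → C ⊗[ℂ] C,
    (∀ a : C, Tendsto (fun n => projTensorSN ν ν (tactL C a (u n) - tactR C a (u n))) atTop (𝓝 0)) ∧
    (∀ a : C, Tendsto (fun n => ν (tpi C (u n) * a - a)) atTop (𝓝 0))

/-- Pseudo-contractibility: there is a central approximate diagonal. -/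
def PseudoContractibleSN : Prop :=
  ∃ (ι : Type) (φ : Filter ι) (u : ι → C ⊗[ℂ] C), φ.NeBot ∧
    (∀ (a : C) i, tactL C a (u i) = tactR C a (u i)) ∧
    (∀ a : C, Tendsto (fun i => ν (tpi C (u i) * a - a)) φ (𝓝 0))

/-- Bounded pseudo-contractibility: a central approximate diagonal `(u_i)` such that
`(π(u_i))` is a multiplier-bounded approximate identity. -/
def BddPseudoContractibleSN : Prop :=
  ∃ (ι : Type) (φ : Filter ι) (u : ι → C ⊗[ℂ] C), φ.NeBot ∧
    (∀ (a : C) i, tactL C a (u i) = tactR C a (u i)) ∧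
    (∀ a : C, Tendsto (fun i => ν (tpi C (u i) * a - a)) φ (𝓝 0)) ∧
    (∃ K : ℝ, 0 < K ∧ ∀ i (a : C), ν (tpi C (u i) * a) ≤ K * ν a)

end SN

section Normed

variable (A : Type) [NonUnitalNormedRing A] [NormedSpace ℂ A]
  [IsScalarTower ℂ A A] [SMulCommClass ℂ A A]

def PseudoAmenable : Prop := PseudoAmenableSN A (fun a => ‖a‖)
def SeqPseudoAmenable : Prop := SeqPseudoAmenableSN A (fun a => ‖a‖)
def PseudoContractible : Prop := PseudoContractibleSN A (fun a => ‖a‖)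
def BddPseudoContractible : Prop := BddPseudoContractibleSN A (fun a => ‖a‖)

/-- `A` has a (two-sided) approximate identity. -/
def HasApproxIdentity : Prop :=
  ∃ (ι : Type) (φ : Filter ι) (e : ι → A), φ.NeBot ∧
    ∀ a : A, Tendsto (fun i => e i * a) φ (𝓝 a) ∧ Tendsto (fun i => a * e i) φ (𝓝 a)

/-- `A` has a bounded (two-sided) approximate identity. -/
def HasBoundedApproxIdentity : Prop :=
  ∃ (ι : Type) (φ : Filter ι) (e : ι → A), φ.NeBot ∧ (∃ C : ℝ, ∀ i, ‖e i‖ ≤ C) ∧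
    ∀ a : A, Tendsto (fun i => e i * a) φ (𝓝 a) ∧ Tendsto (fun i => a * e i) φ (𝓝 a)

/-- `A` has a left approximate identity. -/
def HasLeftApproxIdentity : Prop :=
  ∃ (ι : Type) (φ : Filter ι) (e : ι → A), φ.NeBot ∧
    ∀ a : A, Tendsto (fun i => e i * a) φ (𝓝 a)

/-- `A` has a right approximate identity. -/
def HasRightApproxIdentity : Prop :=
  ∃ (ι : Type) (φ : Filter ι) (e : ι → A), φ.NeBot ∧
    ∀ a : A, Tendsto (fun i => a * e i) φ (𝓝 a)

/-- `A` has a central approximate identity. -/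
def HasCentralApproxIdentity : Prop :=
  ∃ (ι : Type) (φ : Filter ι) (e : ι → A), φ.NeBot ∧
    (∀ (a : A) i, a * e i = e i * a) ∧
    ∀ a : A, Tendsto (fun i => e i * a) φ (𝓝 a)

/-- `A` is approximately biprojective: there is a net `(T_α)` of bounded `A`-bimodule morphisms
`A → A ⊗̂ A` with `π ∘ T_α (a) → a` for every `a`. -/
def ApproxBiprojective : Prop :=
  ∃ (ι : Type) (φ : Filter ι) (T : ι → (A →ₗ[ℂ] A ⊗[ℂ] A)), φ.NeBot ∧
    (∀ i, ∃ C : ℝ, ∀ a, projTensorSN (fun x : A => ‖x‖) (fun x : A => ‖x‖) (T i a) ≤ C * ‖a‖) ∧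
    (∀ i (a b : A), T i (a * b) = tactL A a (T i b) ∧ T i (a * b) = tactR A b (T i a)) ∧
    (∀ a : A, Tendsto (fun i => tpi A (T i a)) φ (𝓝 a))

end Normed


end

section Helpers

/-- Hahn-Banach: a point on which every functional vanishing on `S` vanishes lies in the
closure of `S`. -/
theorem mem_closure_of_forall_dual {E : Type} [NormedAddCommGroup E] [NormedSpace ℂ E]
    (S : Submodule ℂ E) (v : E)
    (h : ∀ f : E →L[ℂ] ℂ, (∀ w ∈ S, f w = 0) → f v = 0) : v ∈ closure (S : Set E) := by
  by_contra hv
  let P := S.topologicalClosure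
  have : IsClosed (P : Set E) := S.isClosed_topologicalClosure
  have hne : P.mkQL v ≠ 0 := by
    intro h0
    exact hv ((Submodule.Quotient.mk_eq_zero P).1 h0)
  obtain ⟨g, hg⟩ := SeparatingDual.exists_ne_zero (R := ℂ) hne
  refine hg (h (g.comp P.mkQL) fun w hw => ?_)
  have : P.mkQL w = 0 := (Submodule.Quotient.mk_eq_zero P).2 (S.le_topologicalClosure hw)
  simp [this]

/-- If `A` is weak* approximately amenable, then every continuous derivation into every
bimodule can be approximated, in norm on finite sets, by inner derivations. -/
theorem finite_approx {A : Type} [NonUnitalNormedRing A] [NormedSpace ℂ A]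
    [IsScalarTower ℂ A A] [SMulCommClass ℂ A A] (hA : WeakStarApproximatelyAmenable A)
    {X : Type} [NormedAddCommGroup X] [NormedSpace ℂ X] (M : BanachBimod A X)
    (D : A →L[ℂ] X) (hD : M.IsDerivation D) (F : Finset A) (ε : ℝ) (hε : 0 < ε) :
    ∃ x : X, ∀ a ∈ F, ‖M.l a x - M.r a x - D a‖ < ε := by
  classical
  let T : X →L[ℂ] (F → X) := ContinuousLinearMap.pi fun a => M.l a - M.r a
  have hmem : (fun a : F => D a) ∈ closure (T.range : Set (F → X)) := by
    refine mem_closure_of_forall_dual _ _ fun f hf => ?_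
    let J := NormedSpace.inclusionInDoubleDual ℂ X
    obtain ⟨ι, φ, x, hφ, hx⟩ := hA (X →L[ℂ] ℂ) _ _ M.dual (J.comp D) (by
      intro a b
      ext ξ
      have := congrArg ξ (hD a b)
      rw [map_add] at this
      exact this)
    let g : F → (X →L[ℂ] ℂ) := fun a => f.comp (ContinuousLinearMap.single ℂ (fun _ => X) a)
    have hsum : ∀ v : F → X, ∑ a, g a (v a) = f v := fun v =>
      ContinuousLinearMap.sum_comp_single ℂ (fun _ => X) f v
    have key : ∑ a : F, (M.dual.r a (g a) - M.dual.l a (g a)) = 0 := by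
      ext y
      have h1 := hf (T y) ⟨y, rfl⟩
      rw [← hsum] at h1
      rw [ContinuousLinearMap.sum_apply, ContinuousLinearMap.zero_apply, ← h1]
      refine Finset.sum_congr rfl fun a _ => ?_
      exact (map_sub (g a) (M.l a y) (M.r a y)).symm
    have hlim := tendsto_finsetSum (Finset.univ : Finset F) fun a _ => hx a (g a)
    have hz : ∀ i, ∑ a : F, (M.dual.dual.l a (x i) - M.dual.dual.r a (x i)) (g a) = 0 := by
      intro i
      have h2 := congrArg (x i) key
      rw [map_sum, map_zero] at h2
      rw [← h2]
      refine Finset.sum_congr rfl fun a _ => ?_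
      exact (map_sub (x i) (M.dual.r a (g a)) (M.dual.l a (g a))).symm
    simp only [hz] at hlim
    have := tendsto_nhds_unique hlim tendsto_const_nhds
    rw [← hsum]
    exact this
  obtain ⟨w, ⟨x, rfl⟩, hw⟩ := Metric.mem_closure_iff.1 hmem ε hε
  refine ⟨x, fun a ha => ?_⟩
  have := (dist_pi_lt_iff hε).1 hw ⟨a, ha⟩
  rw [dist_comm, dist_eq_norm] at this
  exact this

end Helpers

/-- A Banach algebra `A` is approximately amenable if and only if it is weak*
approximately amenable. -/
theorem approxAmenable_iff_weakStarApproxAmenable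
    (A : Type) [NonUnitalNormedRing A] [NormedSpace ℂ A]
    [IsScalarTower ℂ A A] [SMulCommClass ℂ A A] [CompleteSpace A] :
    ApproximatelyAmenable A ↔ WeakStarApproximatelyAmenable A := by
  constructor
  · intro h X _ _ M D hD
    obtain ⟨ι, φ, x, hφ, hx⟩ := h X _ _ M D hD
    refine ⟨ι, φ, x, hφ, fun a ξ => ?_⟩
    exact ((ContinuousLinearMap.apply ℂ ℂ ξ).continuous.tendsto _).comp (hx a)
  · intro h X _ _ M D hD
    have H : ∀ p : Finset A × ℕ, ∃ x : X →L[ℂ] ℂ, ∀ a ∈ p.1,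
        ‖M.dual.l a x - M.dual.r a x - D a‖ < 1 / ((p.2 : ℝ) + 1) := fun p =>
      finite_approx h M.dual D hD p.1 _ Nat.one_div_pos_of_nat
    choose x hx using H
    classical
    refine ⟨Finset A × ℕ, atTop, x, inferInstance, fun a => ?_⟩
    rw [Metric.tendsto_atTop]
    intro ε hε
    obtain ⟨n, hn⟩ := exists_nat_one_div_lt hε
    refine ⟨({a}, n), fun p hp => ?_⟩
    rw [dist_eq_norm]
    refine (hx p a (hp.1 (Finset.mem_singleton_self a))).trans (lt_of_le_of_lt ?_ hn)
    exact Nat.one_div_le_one_div hp.2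
end

section
/- A Banach algebra A is approximately contractible if and only if it is approximately amenable. -/
open Filter Topology TensorProduct

/-- Hahn-Banach: a point outside the closure of a subspace is separated from it by a
continuous functional vanishing on the subspace. -/
theorem exists_functional_of_notMem_closure {E : Type} [NormedAddCommGroup E] [NormedSpace ℂ E]
    (P : Submodule ℂ E) (y : E) (hy : y ∉ closure (P : Set E)) :
    ∃ f : E →L[ℂ] ℂ, (∀ p ∈ P, f p = 0) ∧ f y ≠ 0 := by
  have hcl : IsClosed (P.topologicalClosure : Set E) := P.isClosed_topologicalClosure
  have hne : P.topologicalClosure.mkQ y ≠ 0 := by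
    intro h
    apply hy
    rw [Submodule.mkQ_apply, Submodule.Quotient.mk_eq_zero] at h
    exact h
  obtain ⟨g, hg⟩ := SeparatingDual.exists_ne_zero (R := ℂ) hne
  refine ⟨g.comp P.topologicalClosure.mkQL, fun p hp => ?_, hg⟩
  have : P.topologicalClosure.mkQ p = 0 := by
    rw [Submodule.mkQ_apply, Submodule.Quotient.mk_eq_zero]
    exact P.le_topologicalClosure hp
  change g (P.topologicalClosure.mkQ p) = 0
  rw [this, map_zero]

/-- If the derivation `D` becomes approximately inner in the bidual, then over every finite set
of elements it is approximated in norm by inner derivations of the module itself. -/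
theorem finite_mem_closure_of_bidual {A : Type} [NonUnitalNormedRing A] [NormedSpace ℂ A]
    {X : Type} [NormedAddCommGroup X] [NormedSpace ℂ X] (M : BanachBimod A X) (D : A →L[ℂ] X)
    (h : M.dual.dual.ApproxInner ((NormedSpace.inclusionInDoubleDual ℂ X).comp D))
    (I : Type) [Fintype I] (s : I → A) :
    (fun i => D (s i)) ∈ closure (Set.range fun (x : X) (i : I) => M.l (s i) x - M.r (s i) x) := by
  classical
  by_contra hcon
  let T : X →ₗ[ℂ] (I → X) := LinearMap.pi fun i => (M.l (s i) - M.r (s i) : X →L[ℂ] X).toLinearMap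
  have hr : (Set.range fun (x : X) (i : I) => M.l (s i) x - M.r (s i) x)
      = ((LinearMap.range T : Submodule ℂ (I → X)) : Set (I → X)) := by
    ext v; simp [T, LinearMap.mem_range, funext_iff]
  rw [hr] at hcon
  obtain ⟨f, hf0, hf1⟩ := exists_functional_of_notMem_closure _ _ hcon
  let g : I → (X →L[ℂ] ℂ) := fun i => f.comp (ContinuousLinearMap.single ℂ (fun _ => X) i)
  have hfg : ∀ v : I → X, f v = ∑ i, g i (v i) := by
    intro v
    conv_lhs => rw [← Finset.univ_sum_single v]
    rw [map_sum]
    rfl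
  obtain ⟨ι, φ, ξ, hφ, hlim⟩ := h
  have hz : ∑ i, (M.dual.r (s i) (g i) - M.dual.l (s i) (g i)) = 0 := by
    ext x
    have := hf0 (T x) ⟨x, rfl⟩
    rw [hfg] at this
    simpa [T, BanachBimod.dual] using this
  have hlim2 : Tendsto (fun j => ∑ i, (M.dual.dual.l (s i) (ξ j) - M.dual.dual.r (s i) (ξ j)) (g i))
      φ (𝓝 (∑ i, g i (D (s i)))) := by
    refine tendsto_finsetSum _ fun i _ => ?_
    exact ((ContinuousLinearMap.apply ℂ ℂ (g i)).continuous.tendsto _).comp (hlim (s i))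
  have hconst : ∀ j, ∑ i, (M.dual.dual.l (s i) (ξ j) - M.dual.dual.r (s i) (ξ j)) (g i) = 0 := by
    intro j
    have := congrArg (ξ j) hz
    rw [map_sum, map_zero] at this
    rw [← this]
    refine Finset.sum_congr rfl fun i _ => ?_
    rw [map_sub]
    rfl
  simp only [hconst] at hlim2
  apply hf1
  rw [hfg]
  exact tendsto_nhds_unique hlim2 tendsto_const_nhds

theorem approxInner_of_bidual {A : Type} [NonUnitalNormedRing A] [NormedSpace ℂ A]
    {X : Type} [NormedAddCommGroup X] [NormedSpace ℂ X] (M : BanachBimod A X) (D : A →L[ℂ] X)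
    (h : M.dual.dual.ApproxInner ((NormedSpace.inclusionInDoubleDual ℂ X).comp D)) :
    M.ApproxInner D := by
  refine ⟨X, comap (fun (x : X) (a : A) => M.l a x - M.r a x) (𝓝 (fun a => D a)), id, ?_, ?_⟩
  · rw [comap_neBot_iff]
    intro t ht
    rw [nhds_pi, Filter.mem_pi'] at ht
    obtain ⟨I, u, hu, hsub⟩ := ht
    have hmem := finite_mem_closure_of_bidual M D h I (fun i => (i : A))
    rw [mem_closure_iff_nhds] at hmem
    obtain ⟨_, hv, x, rfl⟩ := hmem (Set.pi Set.univ fun i : I => u i)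
      (set_pi_mem_nhds Set.finite_univ fun i _ => hu i)
    exact ⟨x, hsub fun a ha => hv ⟨a, ha⟩ trivial⟩
  · intro a
    exact ((continuous_apply (A := fun _ : A => X) a).tendsto _).comp tendsto_comap

/-- A Banach algebra `A` is approximately contractible if and only if it is
approximately amenable. -/
theorem approxContractible_iff_approxAmenable
    (A : Type) [NonUnitalNormedRing A] [NormedSpace ℂ A]
    [IsScalarTower ℂ A A] [SMulCommClass ℂ A A] [CompleteSpace A] :
    ApproximatelyContractible A ↔ ApproximatelyAmenable A := by
  constructor
  · intro h X _ _ M D hD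
    exact h _ _ _ M.dual D hD
  · intro h X _ _ M D hD
    refine approxInner_of_bidual M D (h _ _ _ M.dual _ ?_)
    intro a b
    ext f
    simp [BanachBimod.dual, hD a b]
end

section
/- A Banach algebra A with a bounded approximate identity is approximately amenable if and only if it is pseudo-amenable. -/
open Filter Topology TensorProduct

open Filter Topology TensorProduct
set_option linter.unusedSectionVars false
section P0
variable {A : Type} [NonUnitalNormedRing A] [NormedSpace ℂ A]
  [IsScalarTower ℂ A A] [SMulCommClass ℂ A A]

noncomputable abbrev paSN (t : A ⊗[ℂ] A) : ℝ := projTensorSN (fun x : A => ‖x‖) (fun x : A => ‖x‖) t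

def paSet (t : A ⊗[ℂ] A) : Set ℝ :=
  {r : ℝ | ∃ L : List (A × A), t = (L.map fun p => p.1 ⊗ₜ[ℂ] p.2).sum ∧
      r = (L.map fun p => ‖p.1‖ * ‖p.2‖).sum}

theorem paSN_eq (t : A ⊗[ℂ] A) : paSN t = sInf (paSet t) := rfl

theorem paSet_nonempty (t : A ⊗[ℂ] A) : (paSet t).Nonempty := by
  induction t using TensorProduct.induction_on with
  | zero => exact ⟨0, [], by simp, by simp⟩
  | tmul x y => exact ⟨‖x‖ * ‖y‖, [(x, y)], by simp, by simp⟩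
  | add s t hs ht =>
    obtain ⟨r, L, h1, h2⟩ := hs
    obtain ⟨r', L', h1', h2'⟩ := ht
    exact ⟨r + r', L ++ L', by simp [h1, h1'], by simp [h2, h2']⟩

theorem paSet_nonneg (t : A ⊗[ℂ] A) {r : ℝ} (hr : r ∈ paSet t) : 0 ≤ r := by
  obtain ⟨L, -, rfl⟩ := hr
  apply List.sum_nonneg
  intro x hx
  simp only [List.mem_map] at hx
  obtain ⟨p, -, rfl⟩ := hx
  positivity

theorem paSet_bdd (t : A ⊗[ℂ] A) : BddBelow (paSet t) := ⟨0, fun _ h => paSet_nonneg t h⟩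

theorem paSN_nonneg (t : A ⊗[ℂ] A) : 0 ≤ paSN t :=
  Real.sInf_nonneg fun _ h => paSet_nonneg t h

theorem paSN_bound {Y : Type} [SeminormedAddCommGroup Y] [NormedSpace ℂ Y] (Φ : A ⊗[ℂ] A →ₗ[ℂ] Y)
    (K : ℝ) (hK : 0 ≤ K) (h : ∀ x y, ‖Φ (x ⊗ₜ y)‖ ≤ K * (‖x‖ * ‖y‖)) (t : A ⊗[ℂ] A) :
    ‖Φ t‖ ≤ K * paSN t := by
  have key : ∀ L : List (A × A), ‖Φ ((L.map fun p => p.1 ⊗ₜ[ℂ] p.2).sum)‖ ≤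
      K * (L.map fun p => ‖p.1‖ * ‖p.2‖).sum := by
    intro L
    induction L with
    | nil => simp
    | cons p L ih =>
      simp only [List.map_cons, List.sum_cons, map_add, mul_add]
      exact (norm_add_le _ _).trans (add_le_add (h _ _) ih)
  rcases hK.eq_or_lt with h0 | h0
  · obtain ⟨r, L, h1, h2⟩ := paSet_nonempty t
    have := key L
    rw [← h1] at this
    rw [← h0] at this ⊢
    simpa using this
  · rw [mul_comm, ← div_le_iff₀ h0, paSN_eq]
    apply le_csInf (paSet_nonempty t)
    rintro r ⟨L, h1, rfl⟩
    rw [div_le_iff₀ h0, mul_comm, h1]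
    exact key L

theorem paSN_tmul (x y : A) : paSN (x ⊗ₜ[ℂ] y) ≤ ‖x‖ * ‖y‖ :=
  csInf_le (paSet_bdd _) ⟨[(x, y)], by simp, by simp⟩

theorem paSN_zero : paSN (0 : A ⊗[ℂ] A) = 0 :=
  le_antisymm (csInf_le (paSet_bdd _) ⟨[], by simp, by simp⟩) (paSN_nonneg _)

theorem paSN_add (s t : A ⊗[ℂ] A) : paSN (s + t) ≤ paSN s + paSN t := by
  apply le_of_forall_pos_lt_add
  intro ε hε
  obtain ⟨r, ⟨L, h1, h2⟩, hr⟩ := Real.lt_sInf_add_pos (paSet_nonempty s) (half_pos hε)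
  obtain ⟨r', ⟨L', h1', h2'⟩, hr'⟩ := Real.lt_sInf_add_pos (paSet_nonempty t) (half_pos hε)
  rw [← paSN_eq] at hr hr'
  have : paSN (s + t) ≤ r + r' :=
    csInf_le (paSet_bdd _) ⟨L ++ L', by simp [h1, h1'], by simp [h2, h2']⟩
  linarith

theorem paSN_smul_le (c : ℂ) (t : A ⊗[ℂ] A) : paSN (c • t) ≤ ‖c‖ * paSN t := by
  rw [mul_comm]
  rcases (norm_nonneg c).eq_or_lt with h0 | h0
  · have : c = 0 := by simpa using h0.symm
    subst this
    simp [paSN_zero]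
  · rw [← div_le_iff₀ h0, paSN_eq t]
    apply le_csInf (paSet_nonempty t)
    rintro r ⟨L, h1, rfl⟩
    rw [div_le_iff₀ h0]
    apply csInf_le (paSet_bdd _)
    refine ⟨L.map fun p => (c • p.1, p.2), ?_, ?_⟩
    · rw [h1, List.smul_sum]
      simp [Function.comp_def, TensorProduct.smul_tmul']
    · simp only [List.map_map, Function.comp_def, norm_smul, mul_assoc]
      rw [List.sum_map_mul_left, mul_comm]

theorem tpi_bound (t : A ⊗[ℂ] A) : ‖tpi A t‖ ≤ paSN t := by
  have := paSN_bound (tpi A) 1 zero_le_one (fun x y => by simpa [tpi] using norm_mul_le x y) t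
  simpa using this

theorem tpi_tactL (a : A) (t : A ⊗[ℂ] A) : tpi A (tactL A a t) = a * tpi A t := by
  induction t using TensorProduct.induction_on with
  | zero => simp
  | tmul x y => simp [tpi, tactL, mul_assoc]
  | add s t hs ht => simp only [map_add, hs, ht, mul_add]

theorem tpi_tactR (a : A) (t : A ⊗[ℂ] A) : tpi A (tactR A a t) = tpi A t * a := by
  induction t using TensorProduct.induction_on with
  | zero => simp
  | tmul x y => simp [tpi, tactR, mul_assoc]
  | add s t hs ht => simp only [map_add, hs, ht, add_mul]

end P0

open Filter Topology TensorProduct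
set_option linter.unusedSectionVars false
section P1
theorem cohen_step {A Y : Type} [NonUnitalNormedRing A] [NormedSpace ℂ A]
    [NormedAddCommGroup Y] [NormedSpace ℂ Y] [CompleteSpace Y]
    (L : A →L[ℂ] (Y →L[ℂ] Y)) (hL : ∀ a b, L (a * b) = (L a).comp (L b))
    (hn : ∀ a, ‖L a‖ ≤ ‖a‖) (C : ℝ) (hC : 0 ≤ C) {ι : Type} (φ : Filter ι) [φ.NeBot] (e : ι → A)
    (he : ∀ i, ‖e i‖ ≤ C)
    (hea : ∀ a : A, Tendsto (fun i => e i * a) φ (𝓝 a) ∧ Tendsto (fun i => a * e i) φ (𝓝 a))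
    (x : Y) (γ : ℝ) (hγ : γ * (C + 1) = 1 / 2) (n : ℕ) (a : A) (y : Y)
    (hy : Tendsto (fun i => L (e i) y) φ (𝓝 y))
    (hxy : ((1 - γ : ℝ) : ℂ) ^ n • y + L a y = x) :
    ∃ (a' : A) (y' : Y), Tendsto (fun i => L (e i) y') φ (𝓝 y') ∧
      ((1 - γ : ℝ) : ℂ) ^ (n + 1) • y' + L a' y' = x ∧
      ‖a' - a‖ ≤ 1 * (1 - γ) ^ n ∧ ‖y' - y‖ ≤ 1 * (1 - γ) ^ n := by
  have hγ0 : 0 < γ := by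
    by_contra h
    nlinarith
  have hγ1 : γ ≤ 1 / 2 := by nlinarith
  obtain ⟨q, hq⟩ : ∃ q : ℝ, q = 1 - γ := ⟨_, rfl⟩
  rw [← hq] at hxy ⊢
  have hq0 : 0 < q := by linarith
  have hqn : 0 < q ^ n := pow_pos hq0 n
  have h1 : ∀ᶠ i in φ, dist (L (e i) y) y < q ^ n := hy.eventually (Metric.ball_mem_nhds _ hqn)
  have h2 : ∀ᶠ i in φ, dist (a * e i) a < q ^ n :=
    (hea a).2.eventually (Metric.ball_mem_nhds _ hqn)
  obtain ⟨i, hi1, hi2⟩ := (h1.and h2).exists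
  rw [dist_eq_norm] at hi1 hi2
  set E := e i with hE
  have hEC : ‖E‖ ≤ C := he i
  have hLE : ‖L E‖ ≤ C := (hn _).trans hEC
  have hgc : γ * C < q := by nlinarith
  let B : Y →L[ℂ] Y := -(((γ / q : ℝ) : ℂ) • L E)
  have hB : ‖B‖ < 1 := by
    have : ‖B‖ = γ / q * ‖L E‖ := by
      simp only [B, norm_neg, norm_smul, Complex.norm_real, Real.norm_eq_abs]
      rw [abs_of_pos (by positivity)]
    rw [this]
    calc γ / q * ‖L E‖ ≤ γ / q * C := by gcongr
      _ = (γ * C) / q := by ring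
      _ < 1 := by rwa [div_lt_one hq0]
  let T := Units.oneSub B hB
  have hT : ∀ w, w + ((γ / q : ℝ) : ℂ) • L E w = (T : Y →L[ℂ] Y) w := by
    intro w
    simp [T, B]
  let y' : Y := ((q⁻¹ : ℝ) : ℂ) • ((T⁻¹ : (Y →L[ℂ] Y)ˣ) : Y →L[ℂ] Y) y
  have hqc : (q : ℂ) ≠ 0 := by exact_mod_cast hq0.ne'
  have hy' : (q : ℂ) • y' + (γ : ℂ) • L E y' = y := by
    have h3 := hT (((T⁻¹ : (Y →L[ℂ] Y)ˣ) : Y →L[ℂ] Y) y)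
    have h4 : (T : Y →L[ℂ] Y) (((T⁻¹ : (Y →L[ℂ] Y)ˣ) : Y →L[ℂ] Y) y) = y := by
      have : ((T : Y →L[ℂ] Y) * ((T⁻¹ : (Y →L[ℂ] Y)ˣ) : Y →L[ℂ] Y)) y = y := by
        rw [Units.mul_inv]; rfl
      exact this
    rw [h4] at h3
    simp only [y', map_smul, smul_smul]
    refine Eq.trans ?_ h3
    congr 1
    · push_cast
      rw [mul_inv_cancel₀ hqc, one_smul]
    · push_cast
      rw [div_eq_mul_inv]
  have hz : ‖y' - y‖ ≤ ‖L E y - y‖ := by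
    have h5 : (q : ℂ) • (y' - y) = (γ : ℂ) • (y - L E y) - (γ : ℂ) • L E (y' - y) := by
      have : (q : ℂ) • y' = y - (γ : ℂ) • L E y' := by rw [← hy']; simp
      rw [smul_sub, this, map_sub, smul_sub, smul_sub, hq]
      push_cast
      module
    have h6 : q * ‖y' - y‖ ≤ γ * ‖L E y - y‖ + γ * (C * ‖y' - y‖) := by
      calc q * ‖y' - y‖ = ‖(q : ℂ) • (y' - y)‖ := by
            rw [norm_smul, Complex.norm_real, Real.norm_of_nonneg hq0.le]
        _ ≤ ‖(γ : ℂ) • (y - L E y)‖ + ‖(γ : ℂ) • L E (y' - y)‖ := by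
            rw [h5]; exact norm_sub_le _ _
        _ ≤ _ := by
            rw [norm_smul, norm_smul, Complex.norm_real, Real.norm_of_nonneg hγ0.le,
              norm_sub_rev y]
            gcongr
            exact ((L E).le_opNorm _).trans (by gcongr)
    have h7 : (q - γ * C) = 1 / 2 := by rw [hq]; linarith
    nlinarith [norm_nonneg (L E y - y), norm_nonneg (y' - y)]
  refine ⟨(q : ℂ) • a + (γ : ℂ) • (a * E) + ((γ : ℂ) * (q : ℂ) ^ n) • E, y', ?_, ?_, ?_, ?_⟩
  · have h8 : y' = (q : ℂ)⁻¹ • (y - (γ : ℂ) • L E y') := by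
      rw [eq_inv_smul_iff₀ hqc, ← hy']; simp
    have h9 : Tendsto (fun i => L (e i) (L E y')) φ (𝓝 (L E y')) := by
      have h10 : Tendsto (fun i => L (e i * E) y') φ (𝓝 (L E y')) :=
        ((ContinuousLinearMap.apply ℂ Y y').continuous.comp L.continuous).continuousAt.tendsto.comp
          (hea E).1
      simpa [hL] using h10
    have h11 := (hy.sub (h9.const_smul (γ : ℂ))).const_smul (q : ℂ)⁻¹
    rw [← h8] at h11
    refine h11.congr fun j => ?_
    conv_rhs => rw [h8]
    simp only [map_smul, map_sub]
  · rw [← hxy]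
    conv_rhs => rw [← hy']
    simp only [map_add, map_smul, hL, add_apply, smul_apply,
      ContinuousLinearMap.comp_apply]
    module
  · have : (q : ℂ) • a + (γ : ℂ) • (a * E) + ((γ : ℂ) * (q : ℂ) ^ n) • E - a =
        (γ : ℂ) • (a * E - a) + ((γ : ℂ) * (q : ℂ) ^ n) • E := by
      rw [hq]; push_cast; module
    rw [this]
    calc _ ≤ ‖(γ : ℂ) • (a * E - a)‖ + ‖((γ : ℂ) * (q : ℂ) ^ n) • E‖ := norm_add_le _ _
      _ = γ * ‖a * E - a‖ + γ * q ^ n * ‖E‖ := by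
        rw [norm_smul, norm_smul, norm_mul, norm_pow, Complex.norm_real, Complex.norm_real,
          Real.norm_of_nonneg hγ0.le, Real.norm_of_nonneg hq0.le]
      _ ≤ γ * q ^ n + γ * q ^ n * C := by gcongr
      _ = (γ * (C + 1)) * q ^ n := by ring
      _ ≤ _ := by rw [hγ]; gcongr; norm_num
  · rw [one_mul]; exact hz.trans hi1.le

theorem cohen_module {A Y : Type} [NonUnitalNormedRing A] [NormedSpace ℂ A] [CompleteSpace A]
    [NormedAddCommGroup Y] [NormedSpace ℂ Y] [CompleteSpace Y]
    (L : A →L[ℂ] (Y →L[ℂ] Y)) (hL : ∀ a b, L (a * b) = (L a).comp (L b))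
    (hn : ∀ a, ‖L a‖ ≤ ‖a‖) (C : ℝ) (hC : 0 ≤ C) {ι : Type} (φ : Filter ι) [φ.NeBot] (e : ι → A)
    (he : ∀ i, ‖e i‖ ≤ C)
    (hea : ∀ a : A, Tendsto (fun i => e i * a) φ (𝓝 a) ∧ Tendsto (fun i => a * e i) φ (𝓝 a))
    (x : Y) (hx : Tendsto (fun i => L (e i) x) φ (𝓝 x)) :
    ∃ (b : A) (y : Y), x = L b y := by
  obtain ⟨γ, hγ⟩ : ∃ γ : ℝ, γ * (C + 1) = 1 / 2 :=
    ⟨1 / 2 / (C + 1), by field_simp⟩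
  have hγ0 : 0 < γ := by
    by_contra h
    nlinarith
  have hγ1 : γ ≤ 1 / 2 := by nlinarith
  let P : ℕ → A × Y → Prop := fun n s => Tendsto (fun i => L (e i) s.2) φ (𝓝 s.2) ∧
    ((1 - γ : ℝ) : ℂ) ^ n • s.2 + L s.1 s.2 = x
  have step : ∀ (n : ℕ) (s : {s // P n s}), ∃ s' : {s // P (n + 1) s},
      ‖s'.1.1 - s.1.1‖ ≤ 1 * (1 - γ) ^ n ∧ ‖s'.1.2 - s.1.2‖ ≤ 1 * (1 - γ) ^ n := by
    rintro n ⟨⟨a, y⟩, h1, h2⟩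
    obtain ⟨a', y', h3, h4, h5, h6⟩ :=
      cohen_step L hL hn C hC φ e he hea x γ hγ n a y h1 h2
    exact ⟨⟨(a', y'), h3, h4⟩, h5, h6⟩
  choose f hf1 hf2 using step
  let s : (n : ℕ) → {s // P n s} := fun n => Nat.rec ⟨(0, x), hx, by simp⟩ f n
  have hs : ∀ n, s (n + 1) = f n (s n) := fun n => rfl
  have c1 : CauchySeq (fun n => (s n).1.1) := by
    refine cauchySeq_of_le_geometric (1 - γ) 1 (by linarith) fun n => ?_
    rw [dist_comm, dist_eq_norm, hs]; exact hf1 n _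
  have c2 : CauchySeq (fun n => (s n).1.2) := by
    refine cauchySeq_of_le_geometric (1 - γ) 1 (by linarith) fun n => ?_
    rw [dist_comm, dist_eq_norm, hs]; exact hf2 n _
  obtain ⟨b, hb⟩ := cauchySeq_tendsto_of_complete c1
  obtain ⟨y, hy⟩ := cauchySeq_tendsto_of_complete c2
  refine ⟨b, y, ?_⟩
  have hq : Tendsto (fun n : ℕ => ((1 - γ : ℝ) : ℂ) ^ n) atTop (𝓝 0) := by
    apply tendsto_pow_atTop_nhds_zero_of_norm_lt_one
    rw [Complex.norm_real, Real.norm_eq_abs, abs_lt]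
    constructor <;> linarith
  have hLb : Tendsto (fun n => L (s n).1.1 (s n).1.2) atTop (𝓝 (L b y)) :=
    (L.continuous₂.tendsto (b, y)).comp (hb.prodMk_nhds hy)
  have h7 := (hq.smul hy).add hLb
  have h8 : ∀ n, ((1 - γ : ℝ) : ℂ) ^ n • (s n).1.2 + L (s n).1.1 (s n).1.2 = x :=
    fun n => (s n).2.2
  simp only [h8, zero_smul, zero_add] at h7
  exact tendsto_nhds_unique tendsto_const_nhds h7

open scoped BoundedContinuousFunction in
theorem cohen_null_left {A : Type} [NonUnitalNormedRing A] [NormedSpace ℂ A]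
    [IsScalarTower ℂ A A] [SMulCommClass ℂ A A] [CompleteSpace A]
    (C : ℝ) (hC : 0 ≤ C) {ι : Type} (φ : Filter ι) [φ.NeBot] (e : ι → A)
    (he : ∀ i, ‖e i‖ ≤ C)
    (hea : ∀ a : A, Tendsto (fun i => e i * a) φ (𝓝 a) ∧ Tendsto (fun i => a * e i) φ (𝓝 a))
    (x : ℕ → A) (hx : Tendsto x atTop (𝓝 0)) :
    ∃ (b : A) (y : ℕ → A) (K : ℝ), (∀ j, ‖y j‖ ≤ K) ∧ ∀ j, x j = b * y j := by
  let cl : A →ₗ[ℂ] (ℕ →ᵇ A) :=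
    { toFun := fun a => BoundedContinuousFunction.const ℕ a
      map_add' := fun a b => by ext; rfl
      map_smul' := fun c a => by ext; rfl }
  let cL : A →L[ℂ] (ℕ →ᵇ A) := cl.mkContinuous 1
    (fun a => by rw [one_mul]; exact BoundedContinuousFunction.norm_const_le a)
  let L : A →L[ℂ] ((ℕ →ᵇ A) →L[ℂ] (ℕ →ᵇ A)) := (ContinuousLinearMap.mul ℂ (ℕ →ᵇ A)).comp cL
  have hLa : ∀ a y j, L a y j = a * y j := fun a y j => rfl
  obtain ⟨B, hB⟩ := hx.norm.bddAbove_range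
  have hB' : ∀ j, ‖x j‖ ≤ B := fun j => hB ⟨j, rfl⟩
  let X : ℕ →ᵇ A := BoundedContinuousFunction.ofNormedAddCommGroup x
    continuous_of_discreteTopology B hB'
  have hX : ∀ j, X j = x j := fun j => rfl
  obtain ⟨b, y, hy⟩ := cohen_module L (fun a b => by ext y j; simp [hLa, mul_assoc])
    (fun a => ((ContinuousLinearMap.opNorm_mul_apply_le ℂ (ℕ →ᵇ A) (cL a))).trans
      (BoundedContinuousFunction.norm_const_le a)) C hC φ e he hea X (by
      rw [Metric.tendsto_nhds]
      intro ε hε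
      have h1 : ∀ᶠ j in atTop, ‖x j‖ < ε / 2 / (C + 1) := by
        have := hx.norm.eventually_lt_const (u := ε / 2 / (C + 1)) (by rw [norm_zero]; positivity)
        exact this
      obtain ⟨N, hN⟩ := eventually_atTop.1 h1
      have h2 : ∀ᶠ i in φ, ∀ j ∈ Finset.range N, dist (e i * x j) (x j) < ε / 2 := by
        rw [Filter.eventually_all_finset]
        intro j _
        exact (hea (x j)).1.eventually (Metric.ball_mem_nhds _ (half_pos hε))
      filter_upwards [h2] with i hi
      refine lt_of_le_of_lt ((BoundedContinuousFunction.dist_le (half_pos hε).le).2 fun j => ?_)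
        (half_lt_self hε)
      rw [hLa, hX]
      by_cases hj : j < N
      · exact (hi j (Finset.mem_range.2 hj)).le
      · rw [dist_eq_norm]
        calc ‖e i * x j - x j‖ ≤ ‖e i * x j‖ + ‖x j‖ := norm_sub_le _ _
          _ ≤ C * ‖x j‖ + ‖x j‖ := by
            gcongr
            exact (norm_mul_le _ _).trans (by gcongr; exact he i)
          _ = (C + 1) * ‖x j‖ := by ring
          _ ≤ (C + 1) * (ε / 2 / (C + 1)) := by gcongr; exact (hN j (not_lt.1 hj)).le
          _ = ε / 2 := by field_simp)
  exact ⟨b, y, ‖y‖, fun j => y.norm_coe_le_norm j, fun j => by rw [← hX, hy, hLa]⟩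

theorem cohen_null_right {A : Type} [NonUnitalNormedRing A] [NormedSpace ℂ A]
    [IsScalarTower ℂ A A] [SMulCommClass ℂ A A] [CompleteSpace A]
    (C : ℝ) (hC : 0 ≤ C) {ι : Type} (φ : Filter ι) [φ.NeBot] (e : ι → A)
    (he : ∀ i, ‖e i‖ ≤ C)
    (hea : ∀ a : A, Tendsto (fun i => e i * a) φ (𝓝 a) ∧ Tendsto (fun i => a * e i) φ (𝓝 a))
    (x : ℕ → A) (hx : Tendsto x atTop (𝓝 0)) :
    ∃ (b : A) (y : ℕ → A) (K : ℝ), (∀ j, ‖y j‖ ≤ K) ∧ ∀ j, x j = y j * b := by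
  obtain ⟨b, y, K, hy, h⟩ := cohen_null_left (A := Aᵐᵒᵖ) C hC φ (fun i => MulOpposite.op (e i)) he
    (fun a => ⟨(MulOpposite.continuous_op.tendsto _).comp (hea a.unop).2,
      (MulOpposite.continuous_op.tendsto _).comp (hea a.unop).1⟩)
    (fun j => MulOpposite.op (x j)) ((MulOpposite.continuous_op.tendsto _).comp hx)
  exact ⟨b.unop, fun j => (y j).unop, K, hy, fun j => congrArg MulOpposite.unop (h j)⟩
end P1

open Filter Topology TensorProduct
set_option linter.unusedSectionVars false
section P2
variable {A : Type} [NonUnitalNormedRing A] [NormedSpace ℂ A]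
  [IsScalarTower ℂ A A] [SMulCommClass ℂ A A]

/-- The `ℓ¹`-norm on the unitization. -/
noncomputable def unu (z : Unitization ℂ A) : ℝ := ‖z.fst‖ + ‖z.snd‖

theorem uni_fst_sub (z w : Unitization ℂ A) : (z - w).fst = z.fst - w.fst := by
  rw [sub_eq_add_neg, Unitization.fst_add, Unitization.fst_neg, sub_eq_add_neg]

theorem uni_snd_sub (z w : Unitization ℂ A) : (z - w).snd = z.snd - w.snd := by
  rw [sub_eq_add_neg, Unitization.snd_add, Unitization.snd_neg, sub_eq_add_neg]

theorem unu_nonneg (z : Unitization ℂ A) : 0 ≤ unu z := by unfold unu; positivity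

theorem unu_coe (a : A) : unu (a : Unitization ℂ A) = ‖a‖ := by simp [unu]

theorem unu_sub (z w : Unitization ℂ A) : unu (z - w) ≤ unu z + unu w := by
  simp only [unu, uni_fst_sub, uni_snd_sub]
  linarith [norm_sub_le z.fst w.fst, norm_sub_le z.snd w.snd]

theorem unu_mul (z w : Unitization ℂ A) : unu (z * w) ≤ unu z * unu w := by
  simp only [unu, Unitization.fst_mul, Unitization.snd_mul]
  have h1 := norm_add_le (z.fst • w.snd + w.fst • z.snd) (z.snd * w.snd)
  have h2 := norm_add_le (z.fst • w.snd) (w.fst • z.snd)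
  rw [norm_smul, norm_smul] at h2
  have h3 := norm_mul_le z.snd w.snd
  have h4 := norm_mul_le z.fst w.fst
  nlinarith

theorem unu_one_sub (a : A) : unu (1 - (a : Unitization ℂ A)) = 1 + ‖a‖ := by
  simp [unu, uni_fst_sub, uni_snd_sub]

variable {Y : Type} [NormedAddCommGroup Y] [NormedSpace ℂ Y] (M : BanachBimod A Y)
  (D : A →L[ℂ] Y)

noncomputable def uLs (z : Unitization ℂ A) : Y →L[ℂ] Y := z.fst • ContinuousLinearMap.id ℂ Y + M.l z.snd

theorem bimod_l_sub (a b : A) : M.l (a - b) = M.l a - M.l b := by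
  have := M.l_add (a - b) b
  rw [sub_add_cancel] at this
  rw [this]; simp

theorem uLs_sub (z w : Unitization ℂ A) : uLs M (z - w) = uLs M z - uLs M w := by
  simp only [uLs, uni_fst_sub, uni_snd_sub, bimod_l_sub]
  module

theorem uLs_add (z w : Unitization ℂ A) : uLs M (z + w) = uLs M z + uLs M w := by
  simp only [uLs, Unitization.fst_add, Unitization.snd_add, M.l_add]
  module

theorem uLs_mul (z w : Unitization ℂ A) (v : Y) : uLs M (z * w) v = uLs M z (uLs M w v) := by
  simp only [uLs, Unitization.fst_mul, Unitization.snd_mul, M.l_add, M.l_mul, M.l_smul]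
  simp
  module

theorem uLs_coe (a : A) : uLs M (a : Unitization ℂ A) = M.l a := by simp [uLs]

theorem bimod_l_zero : M.l 0 = 0 := by
  have := bimod_l_sub M 0 0
  simpa using this

theorem uLs_one (v : Y) : uLs M (1 : Unitization ℂ A) v = v := by simp [uLs, bimod_l_zero]

noncomputable def uPhi (z w : Unitization ℂ A) : Y := uLs M z (D w.snd)

noncomputable def uAd (a : A) : Y →L[ℂ] Y := M.l a - M.r a

theorem uAd_uPhi (hD : M.IsDerivation D) (a : A) (z w : Unitization ℂ A) :
    uAd M a (uPhi M D z w) = uPhi M D (a * z) w - uPhi M D z (w * a) + uLs M (z * w) (D a) := by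
  have h1 : ∀ v, M.r a (uLs M z v) = uLs M z (M.r a v) := by
    intro v
    have := congrArg (fun T => T v) (M.lr_comm z.snd a)
    simp only [ContinuousLinearMap.comp_apply] at this
    simp [uLs, this]
  have h2 : M.r a (D w.snd) = D (w.snd * a) - M.l w.snd (D a) := by rw [hD]; simp
  have h3 : (w * (a : Unitization ℂ A)).snd = w.fst • a + w.snd * a := by simp
  simp only [uAd, uPhi, sub_apply, h1, h2, h3, uLs_mul, uLs_coe, map_sub, map_add, map_smul]
  have h4 : uLs M w (D a) = w.fst • D a + M.l w.snd (D a) := by simp [uLs]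
  rw [h4, map_add, map_smul]
  abel

theorem uPhi_bound : ∃ Q : ℝ, 0 ≤ Q ∧ (∀ z w, ‖uPhi M D z w‖ ≤ Q * (unu z * unu w)) := by
  obtain ⟨C, hC⟩ := M.l_bound
  refine ⟨(1 + |C|) * ‖D‖, by positivity, fun z w => ?_⟩
  have h1 : ‖uLs M z‖ ≤ (1 + |C|) * unu z := by
    calc ‖uLs M z‖ ≤ ‖z.fst • ContinuousLinearMap.id ℂ Y‖ + ‖M.l z.snd‖ := norm_add_le _ _
      _ ≤ ‖z.fst‖ * 1 + |C| * ‖z.snd‖ := by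
        gcongr
        · rw [norm_smul]
          gcongr
          exact ContinuousLinearMap.norm_id_le
        · exact (hC _).trans (by gcongr; exact le_abs_self C)
      _ ≤ _ := by
        unfold unu
        nlinarith [norm_nonneg z.fst, norm_nonneg z.snd, abs_nonneg C,
          mul_nonneg (abs_nonneg C) (norm_nonneg z.fst)]
  have h2 : ‖D w.snd‖ ≤ ‖D‖ * unu w := by
    refine (D.le_opNorm _).trans ?_
    gcongr
    unfold unu
    linarith [norm_nonneg w.fst]
  calc ‖uPhi M D z w‖ ≤ ‖uLs M z‖ * ‖D w.snd‖ := (uLs M z).le_opNorm _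
    _ ≤ ((1 + |C|) * unu z) * (‖D‖ * unu w) := by
      gcongr
      exact mul_nonneg (by positivity) (unu_nonneg _)
    _ = _ := by ring

theorem est_step (hD : M.IsDerivation D) (Q : ℝ) (hQ0 : 0 ≤ Q)
    (hQ : ∀ z w, ‖uPhi M D z w‖ ≤ Q * (unu z * unu w)) (δ C K α : ℝ) (hδ : 0 ≤ δ) (hC : 0 ≤ C)
    (hK : 0 ≤ K) (hα : 0 < α)
    (t t' a : A) (ht : ‖t‖ ≤ C) (ht' : ‖t'‖ ≤ C) (r : Unitization ℂ A)
    (h1 : unu ((t : Unitization ℂ A) * r) ≤ δ / α) (h2 : unu ((t' : Unitization ℂ A) * r) ≤ 2 * δ / α)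
    (h3 : unu (r * (t : Unitization ℂ A)) ≤ δ / α) (h4 : unu (r * (t' : Unitization ℂ A)) ≤ 2 * δ / α)
    (h5 : unu (((a - a * t : A) : Unitization ℂ A) * r) ≤ δ * α)
    (h6 : unu (((a - a * t' : A) : Unitization ℂ A) * r) ≤ δ * α)
    (h7 : unu (r * ((a - t * a : A) : Unitization ℂ A)) ≤ δ * α)
    (h8 : unu (r * ((a - t' * a : A) : Unitization ℂ A)) ≤ δ * α)
    (h9 : ‖a - t * a‖ ≤ K * α ^ 2) (h10 : ‖a - a * t'‖ ≤ K * α ^ 2) :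
    ‖uAd M a (uPhi M D ((t' - t : A) * r) (1 - (t : Unitization ℂ A)) +
        uPhi M D (1 - (t' : Unitization ℂ A)) (r * (t' - t : A)))
      - uLs M ((1 - (t : Unitization ℂ A)) * r * (1 - (t : Unitization ℂ A)) -
        (1 - (t' : Unitization ℂ A)) * r * (1 - (t' : Unitization ℂ A))) (D a)‖ ≤
      Q * δ * (4 * (1 + C) + 6 * K) * α := by
  set T : Unitization ℂ A := (t : Unitization ℂ A) with hT
  set T' : Unitization ℂ A := (t' : Unitization ℂ A) with hT'
  set a' : Unitization ℂ A := (a : Unitization ℂ A) with ha'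
  have e1 : ((t' - t : A) : Unitization ℂ A) = T' - T := by simp [T, T']
  have e2 : ((a - a * t : A) : Unitization ℂ A) = a' - a' * T := by simp [T, a']
  have e3 : ((a - a * t' : A) : Unitization ℂ A) = a' - a' * T' := by simp [T', a']
  have e4 : ((a - t * a : A) : Unitization ℂ A) = a' - T * a' := by simp [T, a']
  have e5 : ((a - t' * a : A) : Unitization ℂ A) = a' - T' * a' := by simp [T', a']
  rw [← unu_coe, e4] at h9
  rw [← unu_coe, e3] at h10
  rw [e2] at h5
  rw [e3] at h6
  rw [e4] at h7
  rw [e5] at h8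
  rw [e1, map_add, uAd_uPhi M D hD, uAd_uPhi M D hD]
  have key : uLs M ((1 - T) * r * (1 - T) - (1 - T') * r * (1 - T')) (D a) =
      uLs M ((T' - T) * r * (1 - T)) (D a) + uLs M ((1 - T') * (r * (T' - T))) (D a) := by
    rw [← add_apply, ← uLs_add]
    congr 2
    simp only [mul_sub, sub_mul, mul_one, one_mul, mul_assoc]; abel
  rw [key]
  have reorg : ∀ p1 p2 p3 p4 q1 q2 : Y, p1 - p2 + q1 + (p3 - p4 + q2) - (q1 + q2) =
    (p1 - p2) + (p3 - p4) := by intros; abel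
  rw [reorg]
  have b1 : unu (a' * ((T' - T) * r)) ≤ 2 * (δ * α) := by
    have : a' * ((T' - T) * r) = (a' - a' * T) * r - (a' - a' * T') * r := by simp only [mul_sub, sub_mul, mul_one, one_mul, mul_assoc]; abel
    rw [this]
    linarith [unu_sub ((a' - a' * T) * r) ((a' - a' * T') * r)]
  have b2 : unu (1 - T) ≤ 1 + C := by rw [hT, unu_one_sub]; linarith
  have b2' : unu (1 - T') ≤ 1 + C := by rw [hT', unu_one_sub]; linarith
  have b3 : unu ((T' - T) * r) ≤ 3 * δ / α := by
    rw [sub_mul]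
    refine (unu_sub _ _).trans ((add_le_add h2 h1).trans (le_of_eq (by ring)))
  have b4 : unu (r * (T' - T)) ≤ 3 * δ / α := by
    rw [mul_sub]
    refine (unu_sub _ _).trans ((add_le_add h4 h3).trans (le_of_eq (by ring)))
  have b5 : unu ((1 - T) * a') ≤ K * α ^ 2 := by rw [sub_mul, one_mul]; exact h9
  have b6 : unu (a' * (1 - T')) ≤ K * α ^ 2 := by rw [mul_sub, mul_one]; exact h10
  have b7 : unu (r * (T' - T) * a') ≤ 2 * (δ * α) := by
    have : r * (T' - T) * a' = r * (a' - T * a') - r * (a' - T' * a') := by simp only [mul_sub, sub_mul, mul_one, one_mul, mul_assoc]; abel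
    rw [this]
    linarith [unu_sub (r * (a' - T * a')) (r * (a' - T' * a'))]
  have mulb : ∀ {z w : Unitization ℂ A} {x y : ℝ}, unu z ≤ x → unu w ≤ y →
      ‖uPhi M D z w‖ ≤ Q * (x * y) := by
    intro z w x y hz hw
    refine (hQ z w).trans ?_
    gcongr
    · exact unu_nonneg _
    · exact (unu_nonneg _).trans hz
  have c1 := mulb b1 b2
  have c2 := mulb b3 b5
  have c3 := mulb b6 b4
  have c4 := mulb b2' b7
  calc _ ≤ ‖uPhi M D (a' * ((T' - T) * r)) (1 - T)‖ + ‖uPhi M D ((T' - T) * r) ((1 - T) * a')‖ +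
        (‖uPhi M D (a' * (1 - T')) (r * (T' - T))‖ + ‖uPhi M D (1 - T') (r * (T' - T) * a')‖) :=
      (norm_add_le _ _).trans (add_le_add (norm_sub_le _ _) (norm_sub_le _ _))
    _ ≤ _ := add_le_add (add_le_add c1 c2) (add_le_add c3 c4)
    _ = _ := by field_simp; ring

theorem phiA (hD : M.IsDerivation D) (Q : ℝ) (hQ0 : 0 ≤ Q)
    (hQ : ∀ z w, ‖uPhi M D z w‖ ≤ Q * (unu z * unu w)) :
    ∃ Φ : A ⊗[ℂ] A →ₗ[ℂ] Y, (∀ t, ‖Φ t‖ ≤ Q * paSN t) ∧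
      ∀ a t, uAd M a (Φ t) = Φ (tactL A a t - tactR A a t) + M.l (tpi A t) (D a) := by
  let B : A →ₗ[ℂ] A →ₗ[ℂ] Y := LinearMap.mk₂ ℂ (fun x y => M.l x (D y))
    (fun x y z => by simp [M.l_add]) (fun c x y => by simp [M.l_smul])
    (fun x y z => by simp) (fun c x y => by simp)
  have hB : ∀ x y, TensorProduct.lift B (x ⊗ₜ[ℂ] y) = uPhi M D x y := by
    intro x y
    simp [B, uPhi, uLs_coe]
  refine ⟨TensorProduct.lift B, fun t => paSN_bound _ Q hQ0 (fun x y => ?_) t, fun a t => ?_⟩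
  · rw [hB]
    simpa only [unu_coe] using hQ x y
  · induction t using TensorProduct.induction_on with
    | zero => simp [bimod_l_zero]
    | tmul x y =>
      rw [hB, uAd_uPhi M D hD, map_sub]
      have h1 : tactL A a (x ⊗ₜ y) = (a * x) ⊗ₜ y := by simp [tactL]
      have h2 : tactR A a (x ⊗ₜ y) = x ⊗ₜ (y * a) := by simp [tactR]
      have h3 : tpi A (x ⊗ₜ y) = x * y := by simp [tpi]
      rw [h1, h2, h3, hB, hB, ← uLs_coe]
      simp
    | add s t hs ht =>
      simp only [map_add, hs, ht, map_sub, M.l_add, add_apply]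
      abel

end P2

open Filter Topology TensorProduct
set_option linter.unusedSectionVars false
section P3
variable {A : Type} [NonUnitalNormedRing A] [NormedSpace ℂ A]
  [IsScalarTower ℂ A A] [SMulCommClass ℂ A A]

theorem est_total {Y : Type} [NormedAddCommGroup Y] [NormedSpace ℂ Y] (M : BanachBimod A Y)
    (D : A →L[ℂ] Y) (hD : M.IsDerivation D) (Q : ℝ) (hQ0 : 0 ≤ Q)
    (hQ : ∀ z w, ‖uPhi M D z w‖ ≤ Q * (unu z * unu w)) (δ C K : ℝ) (hδ : 0 ≤ δ) (hC : 0 ≤ C)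
    (hK : 0 ≤ K) (F : Finset A) (t : ℕ → A) (ht0 : t 0 = 0) (ht : ∀ j, ‖t j‖ ≤ C)
    (hta : ∀ a ∈ F, ∀ j, ‖a - t j * a‖ ≤ K * ((1 / 2 : ℝ) ^ j) ^ 2)
    (hat : ∀ a ∈ F, ∀ j, ‖a - a * t j‖ ≤ K * ((1 / 2 : ℝ) ^ j) ^ 2)
    (u : A ⊗[ℂ] A) (hu : ∀ a ∈ F, paSN (tactL A a u - tactR A a u) ≤ δ)
    (h1 : ∀ j, ‖t j - t j * tpi A u‖ ≤ δ / (1 / 2 : ℝ) ^ j)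
    (h2 : ∀ j, ‖t j - tpi A u * t j‖ ≤ δ / (1 / 2 : ℝ) ^ j)
    (h3 : ∀ a ∈ F, ∀ j, ‖(a - a * t j) - (a - a * t j) * tpi A u‖ ≤ δ * (1 / 2 : ℝ) ^ j)
    (h4 : ∀ a ∈ F, ∀ j, ‖(a - t j * a) - tpi A u * (a - t j * a)‖ ≤ δ * (1 / 2 : ℝ) ^ j) (J : ℕ) :
    ∃ f : Y, ∀ a ∈ F, ‖(M.l a f - M.r a f) - D a‖ ≤
      Q * δ * (1 + 2 * (4 * (1 + C) + 6 * K) + (1 + C)) +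
      Q * (1 + C) * (1 + ‖tpi A u‖) * K * ((1 / 2 : ℝ) ^ J) ^ 2 := by
  obtain ⟨Φ, hΦ, hΦa⟩ := phiA M D hD Q hQ0 hQ
  set r : Unitization ℂ A := 1 - (tpi A u : Unitization ℂ A) with hr
  have cr : ∀ x : A, unu ((x : Unitization ℂ A) * r) = ‖x - x * tpi A u‖ := by
    intro x
    rw [← unu_coe, hr, mul_sub, mul_one, Unitization.inr_sub, Unitization.inr_mul]
  have rc : ∀ x : A, unu (r * (x : Unitization ℂ A)) = ‖x - tpi A u * x‖ := by
    intro x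
    rw [← unu_coe, hr, sub_mul, one_mul, Unitization.inr_sub, Unitization.inr_mul]
  have hα : ∀ j : ℕ, 0 < (1 / 2 : ℝ) ^ j := fun j => by positivity
  have hα1 : ∀ j : ℕ, δ / (1 / 2 : ℝ) ^ (j + 1) = 2 * δ / (1 / 2 : ℝ) ^ j := fun j => by
    rw [pow_succ]; field_simp
  have hα2 : ∀ j : ℕ, (1 / 2 : ℝ) ^ (j + 1) ≤ (1 / 2 : ℝ) ^ j := fun j => by
    rw [pow_succ]; nlinarith [hα j]
  let s : ℕ → Y := fun j => uPhi M D ((t (j + 1) - t j : A) * r) (1 - (t j : Unitization ℂ A)) +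
        uPhi M D (1 - (t (j + 1) : Unitization ℂ A)) (r * (t (j + 1) - t j : A))
  let G : ℕ → Unitization ℂ A := fun j =>
    (1 - (t j : Unitization ℂ A)) * r * (1 - (t j : Unitization ℂ A))
  have hs : ∀ a ∈ F, ∀ j, ‖uAd M a (s j) - (uLs M (G j) (D a) - uLs M (G (j + 1)) (D a))‖ ≤
      Q * δ * (4 * (1 + C) + 6 * K) * (1 / 2 : ℝ) ^ j := by
    intro a ha j
    have := est_step M D hD Q hQ0 hQ δ C K ((1 / 2 : ℝ) ^ j) hδ hC hK (hα j) (t j) (t (j + 1)) a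
      (ht _) (ht _) r (by rw [cr]; exact h1 j) (by rw [cr, ← hα1]; exact h1 _)
      (by rw [rc]; exact h2 j) (by rw [rc, ← hα1]; exact h2 _)
      (by rw [cr]; exact h3 a ha j)
      (by rw [cr]; exact (h3 a ha (j + 1)).trans (by gcongr ?_ * ?_; exact hα2 j))
      (by rw [rc]; exact h4 a ha j)
      (by rw [rc]; exact (h4 a ha (j + 1)).trans (by gcongr ?_ * ?_; exact hα2 j))
      (hta a ha j) ((hat a ha (j + 1)).trans (by gcongr ?_ * ?_ ^ 2; exact hα2 j))
    rw [uLs_sub, sub_apply] at this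
    exact this
  refine ⟨Φ u + ∑ j ∈ Finset.range J, s j +
    uPhi M D ((1 - (t J : Unitization ℂ A)) * r) (1 - (t J : Unitization ℂ A)), fun a ha => ?_⟩
  have e0 : ∀ f, M.l a f - M.r a f = uAd M a f := fun f => rfl
  have eG : uLs M (G 0) (D a) = D a - M.l (tpi A u) (D a) := by
    simp only [G, ht0, Unitization.inr_zero, sub_zero, one_mul, mul_one, hr]
    rw [uLs_sub, sub_apply, uLs_one, uLs_coe]
  have tele : ∑ j ∈ Finset.range J, (uLs M (G j) (D a) - uLs M (G (j + 1)) (D a)) =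
      uLs M (G 0) (D a) - uLs M (G J) (D a) :=
    Finset.sum_range_sub' (fun j => uLs M (G j) (D a)) J
  have eL := uAd_uPhi M D hD a ((1 - (t J : Unitization ℂ A)) * r) (1 - (t J : Unitization ℂ A))
  have id1 : uAd M a (Φ u + ∑ j ∈ Finset.range J, s j +
      uPhi M D ((1 - (t J : Unitization ℂ A)) * r) (1 - (t J : Unitization ℂ A))) - D a =
      Φ (tactL A a u - tactR A a u) +
      ∑ j ∈ Finset.range J, (uAd M a (s j) - (uLs M (G j) (D a) - uLs M (G (j + 1)) (D a))) +
      (uPhi M D (a * ((1 - (t J : Unitization ℂ A)) * r)) (1 - (t J : Unitization ℂ A)) -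
      uPhi M D ((1 - (t J : Unitization ℂ A)) * r) ((1 - (t J : Unitization ℂ A)) * a)) := by
    rw [map_add, map_add, map_sum, hΦa, eL, Finset.sum_sub_distrib, tele, eG]
    simp only [G]
    abel
  rw [e0, id1]
  have b1 : ‖Φ (tactL A a u - tactR A a u)‖ ≤ Q * δ :=
    (hΦ _).trans (by gcongr; exact hu a ha)
  have geo : ∀ n, ∑ j ∈ Finset.range n, (1 / 2 : ℝ) ^ j ≤ 2 := fun n => sum_geometric_two_le n
  have b2 : ‖∑ j ∈ Finset.range J,
      (uAd M a (s j) - (uLs M (G j) (D a) - uLs M (G (j + 1)) (D a)))‖ ≤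
      Q * δ * (4 * (1 + C) + 6 * K) * 2 := by
    refine (norm_sum_le _ _).trans ((Finset.sum_le_sum fun j _ => hs a ha j).trans ?_)
    rw [← Finset.mul_sum]
    gcongr
    exact geo J
  have c1 : unu (1 - (t J : Unitization ℂ A)) ≤ 1 + C := by rw [unu_one_sub]; linarith [ht J]
  have b3 : ‖uPhi M D (a * ((1 - (t J : Unitization ℂ A)) * r)) (1 - (t J : Unitization ℂ A))‖ ≤
      Q * (δ * (1 + C)) := by
    refine (hQ _ _).trans ?_
    have c2 : unu ((a : Unitization ℂ A) * ((1 - (t J : Unitization ℂ A)) * r)) ≤ δ := by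
      rw [← mul_assoc, mul_sub (a : Unitization ℂ A) 1, mul_one, ← Unitization.inr_mul,
        ← Unitization.inr_sub, cr]
      refine (h3 a ha J).trans ?_
      exact mul_le_of_le_one_right hδ (pow_le_one₀ (by norm_num) (by norm_num))
    gcongr
    exact unu_nonneg _
  have b4 : ‖uPhi M D ((1 - (t J : Unitization ℂ A)) * r) ((1 - (t J : Unitization ℂ A)) * a)‖ ≤
      Q * (((1 + C) * (1 + ‖tpi A u‖)) * (K * ((1 / 2 : ℝ) ^ J) ^ 2)) := by
    refine (hQ _ _).trans ?_
    have c2 : unu ((1 - (t J : Unitization ℂ A)) * (a : Unitization ℂ A)) ≤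
        K * ((1 / 2 : ℝ) ^ J) ^ 2 := by
      rw [sub_mul, one_mul, ← Unitization.inr_mul, ← Unitization.inr_sub, unu_coe]
      exact hta a ha J
    have c3 : unu ((1 - (t J : Unitization ℂ A)) * r) ≤ (1 + C) * (1 + ‖tpi A u‖) := by
      refine (unu_mul _ _).trans ?_
      rw [hr, unu_one_sub (tpi A u)]
      gcongr
    gcongr
    exact unu_nonneg _
  calc _ ≤ _ := (norm_add_le _ _).trans (add_le_add ((norm_add_le _ _).trans (add_le_add b1 b2))
        ((norm_sub_le _ _).trans (add_le_add b3 b4)))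
    _ = _ := by ring

theorem exists_tseq (C : ℝ) (hC : 0 ≤ C) {ι : Type} (φ : Filter ι) [φ.NeBot] (e : ι → A)
    (he : ∀ i, ‖e i‖ ≤ C)
    (hea : ∀ a : A, Tendsto (fun i => e i * a) φ (𝓝 a) ∧ Tendsto (fun i => a * e i) φ (𝓝 a))
    (F : Finset A) : ∃ (K : ℝ) (t : ℕ → A), 0 ≤ K ∧ t 0 = 0 ∧ (∀ j, ‖t j‖ ≤ C) ∧
      (∀ a ∈ F, ∀ j, ‖a - t j * a‖ ≤ K * ((1 / 2 : ℝ) ^ j) ^ 2) ∧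
      (∀ a ∈ F, ∀ j, ‖a - a * t j‖ ≤ K * ((1 / 2 : ℝ) ^ j) ^ 2) := by
  have h : ∀ j : ℕ, ∃ t : A, ‖t‖ ≤ C ∧ ∀ a ∈ F, ‖a - t * a‖ ≤ ((1 / 2 : ℝ) ^ j) ^ 2 ∧
      ‖a - a * t‖ ≤ ((1 / 2 : ℝ) ^ j) ^ 2 := by
    intro j
    have hp : 0 < ((1 / 2 : ℝ) ^ j) ^ 2 := by positivity
    have : ∀ᶠ i in φ, ∀ a ∈ F, dist (e i * a) a < ((1 / 2 : ℝ) ^ j) ^ 2 ∧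
        dist (a * e i) a < ((1 / 2 : ℝ) ^ j) ^ 2 := by
      rw [Filter.eventually_all_finset]
      intro a _
      exact ((hea a).1.eventually (Metric.ball_mem_nhds _ hp)).and
        ((hea a).2.eventually (Metric.ball_mem_nhds _ hp))
    obtain ⟨i, hi⟩ := this.exists
    refine ⟨e i, he i, fun a ha => ?_⟩
    have := hi a ha
    rw [dist_comm, dist_eq_norm, dist_comm, dist_eq_norm] at this
    exact ⟨this.1.le, this.2.le⟩
  choose t ht hta using h
  have hS : ∀ a ∈ F, ‖a‖ ≤ 1 + ∑ b ∈ F, ‖b‖ := fun a ha => by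
    have := Finset.single_le_sum (f := fun b : A => ‖b‖) (fun i _ => norm_nonneg i) ha
    linarith
  have h1 : 1 ≤ 1 + ∑ b ∈ F, ‖b‖ := by
    have := Finset.sum_nonneg (f := fun b : A => ‖b‖) (s := F) (fun i _ => norm_nonneg i)
    linarith
  refine ⟨1 + ∑ b ∈ F, ‖b‖, fun j => if j = 0 then 0 else t j, by linarith, by simp, ?_, ?_, ?_⟩
  · intro j
    by_cases hj : j = 0
    · simp [hj, hC]
    · simp [hj, ht]
  · intro a ha j
    by_cases hj : j = 0
    · simpa [hj] using hS a ha
    · simp only [hj, if_false]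
      exact (hta j a ha).1.trans (le_mul_of_one_le_left (by positivity) h1)
  · intro a ha j
    by_cases hj : j = 0
    · simpa [hj] using hS a ha
    · simp only [hj, if_false]
      exact (hta j a ha).2.trans (le_mul_of_one_le_left (by positivity) h1)

theorem null_of_bound (x : ℕ → A) (K : ℝ) (h : ∀ j, ‖x j‖ ≤ K * (1 / 2 : ℝ) ^ j) :
    Tendsto x atTop (𝓝 0) := by
  refine squeeze_zero_norm h ?_
  have := (tendsto_pow_atTop_nhds_zero_of_lt_one (r := (1 / 2 : ℝ)) (by norm_num)
    (by norm_num)).const_mul K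
  simpa using this

theorem approxInner_of_pseudo [CompleteSpace A] (hbai : HasBoundedApproxIdentity A)
    (hP : PseudoAmenable A) {Y : Type} [NormedAddCommGroup Y] [NormedSpace ℂ Y]
    (M : BanachBimod A Y) (D : A →L[ℂ] Y) (hD : M.IsDerivation D) (F : Finset A) (ε : ℝ)
    (hε : 0 < ε) : ∃ f : Y, ∀ a ∈ F, ‖(M.l a f - M.r a f) - D a‖ ≤ ε := by
  obtain ⟨ι, φ, e, hφ, ⟨C, he⟩, hea⟩ := hbai
  obtain ⟨i0⟩ := hφ.nonempty
  have hC : 0 ≤ C := (norm_nonneg _).trans (he i0)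
  obtain ⟨κ, ψ, u, hψ, hu1, hu2⟩ := hP
  have hcomm : ∀ b : A, Tendsto (fun i => b * tpi A (u i) - tpi A (u i) * b) ψ (𝓝 0) := by
    intro b
    refine squeeze_zero_norm (fun i => ?_) (hu1 b)
    have := tpi_bound (tactL A b (u i) - tactR A b (u i))
    rwa [map_sub, tpi_tactL, tpi_tactR] at this
  have hpl : ∀ b : A, Tendsto (fun i => tpi A (u i) * b - b) ψ (𝓝 0) := fun b =>
    tendsto_zero_iff_norm_tendsto_zero.2 (hu2 b)
  have hpr : ∀ b : A, Tendsto (fun i => b * tpi A (u i) - b) ψ (𝓝 0) := fun b => by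
    have := (hcomm b).add (hpl b)
    simpa using this
  have nullL : ∀ x : ℕ → A, Tendsto x atTop (𝓝 0) → ∀ δ > (0 : ℝ),
      ∀ᶠ i in ψ, ∀ j, ‖x j - tpi A (u i) * x j‖ ≤ δ := by
    intro x hx δ hδ
    obtain ⟨b, y, K, hy, hxy⟩ := cohen_null_left C hC φ e he hea x hx
    have hK : 0 ≤ K := (norm_nonneg _).trans (hy 0)
    have h1 := (hpl b).norm.eventually_lt_const (u := δ / (K + 1)) (by rw [norm_zero]; positivity)
    filter_upwards [h1] with i hi j
    have : x j - tpi A (u i) * x j = -((tpi A (u i) * b - b) * y j) := by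
      rw [hxy j, sub_mul, mul_assoc]; abel
    rw [this, norm_neg]
    calc _ ≤ ‖tpi A (u i) * b - b‖ * ‖y j‖ := norm_mul_le _ _
      _ ≤ δ / (K + 1) * (K + 1) := by gcongr; linarith [hy j]
      _ = δ := by field_simp
  have nullR : ∀ x : ℕ → A, Tendsto x atTop (𝓝 0) → ∀ δ > (0 : ℝ),
      ∀ᶠ i in ψ, ∀ j, ‖x j - x j * tpi A (u i)‖ ≤ δ := by
    intro x hx δ hδ
    obtain ⟨b, y, K, hy, hxy⟩ := cohen_null_right C hC φ e he hea x hx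
    have hK : 0 ≤ K := (norm_nonneg _).trans (hy 0)
    have h1 := (hpr b).norm.eventually_lt_const (u := δ / (K + 1)) (by rw [norm_zero]; positivity)
    filter_upwards [h1] with i hi j
    have : x j - x j * tpi A (u i) = -(y j * (b * tpi A (u i) - b)) := by
      rw [hxy j, mul_sub, mul_assoc]; abel
    rw [this, norm_neg]
    calc _ ≤ ‖y j‖ * ‖b * tpi A (u i) - b‖ := norm_mul_le _ _
      _ ≤ (K + 1) * (δ / (K + 1)) := by gcongr; linarith [hy j]
      _ = δ := by field_simp
  obtain ⟨K, t, hK, ht0, ht, hta, hat⟩ := exists_tseq C hC φ e he hea F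
  obtain ⟨Q, hQ0, hQ⟩ := uPhi_bound M D
  set R := Q * (1 + 2 * (4 * (1 + C) + 6 * K) + (1 + C)) with hR
  have hR0 : 0 ≤ R := by positivity
  obtain ⟨δ, hδ, hδR⟩ : ∃ δ : ℝ, 0 < δ ∧ R * δ ≤ ε / 2 := by
    refine ⟨ε / 2 / (R + 1), by positivity, ?_⟩
    rw [mul_div_assoc', div_le_iff₀ (by positivity)]
    nlinarith
  have hcn : ∀ j : ℕ, ‖(((1 / 2 : ℝ) : ℂ)) ^ j‖ = (1 / 2 : ℝ) ^ j := fun j => by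
    rw [norm_pow, Complex.norm_real, Real.norm_of_nonneg (by norm_num)]
  have hcn' : ∀ j : ℕ, ‖(((2 : ℝ) : ℂ)) ^ j‖ = (2 : ℝ) ^ j := fun j => by
    rw [norm_pow, Complex.norm_real, Real.norm_of_nonneg (by norm_num)]
  have h22 : ∀ j : ℕ, (2 : ℝ) ^ j * (1 / 2 : ℝ) ^ j = 1 := fun j => by
    rw [← mul_pow]; norm_num
  have n1 : Tendsto (fun j => (((1 / 2 : ℝ) : ℂ)) ^ j • t j) atTop (𝓝 0) := by
    refine null_of_bound _ C fun j => ?_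
    rw [norm_smul, hcn, mul_comm]
    gcongr
    exact ht j
  have n2 : ∀ z : ℕ → A, (∀ j, ‖z j‖ ≤ K * ((1 / 2 : ℝ) ^ j) ^ 2) →
      Tendsto (fun j => (((2 : ℝ) : ℂ)) ^ j • z j) atTop (𝓝 0) := by
    intro z hz
    refine null_of_bound _ K fun j => ?_
    rw [norm_smul, hcn']
    calc _ ≤ (2 : ℝ) ^ j * (K * ((1 / 2 : ℝ) ^ j) ^ 2) := by gcongr; exact hz j
      _ = K * ((2 : ℝ) ^ j * (1 / 2 : ℝ) ^ j) * (1 / 2 : ℝ) ^ j := by ring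
      _ = _ := by rw [h22, mul_one]
  have sc1 : ∀ (j : ℕ) (z : A), ‖(((1 / 2 : ℝ) : ℂ)) ^ j • z‖ ≤ δ → ‖z‖ ≤ δ / (1 / 2 : ℝ) ^ j := by
    intro j z hz
    rw [norm_smul, hcn] at hz
    rw [le_div_iff₀ (by positivity), mul_comm]
    exact hz
  have sc2 : ∀ (j : ℕ) (z : A), ‖(((2 : ℝ) : ℂ)) ^ j • z‖ ≤ δ → ‖z‖ ≤ δ * (1 / 2 : ℝ) ^ j := by
    intro j z hz
    rw [norm_smul, hcn'] at hz
    calc ‖z‖ = (2 : ℝ) ^ j * (1 / 2 : ℝ) ^ j * ‖z‖ := by rw [h22, one_mul]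
      _ = (2 : ℝ) ^ j * ‖z‖ * (1 / 2 : ℝ) ^ j := by ring
      _ ≤ _ := by gcongr
  have e1 := nullL _ n1 δ hδ
  have e2 := nullR _ n1 δ hδ
  have e3 : ∀ᶠ i in ψ, ∀ a ∈ F, ∀ j, ‖(((2 : ℝ) : ℂ)) ^ j • (a - a * t j) -
      (((2 : ℝ) : ℂ)) ^ j • (a - a * t j) * tpi A (u i)‖ ≤ δ := by
    rw [Filter.eventually_all_finset]
    exact fun a ha => nullR _ (n2 _ (hat a ha)) δ hδ
  have e4 : ∀ᶠ i in ψ, ∀ a ∈ F, ∀ j, ‖(((2 : ℝ) : ℂ)) ^ j • (a - t j * a) -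
      tpi A (u i) * (((2 : ℝ) : ℂ)) ^ j • (a - t j * a)‖ ≤ δ := by
    rw [Filter.eventually_all_finset]
    exact fun a ha => nullL _ (n2 _ (hta a ha)) δ hδ
  have e5 : ∀ᶠ i in ψ, ∀ a ∈ F, paSN (tactL A a (u i) - tactR A a (u i)) < δ := by
    rw [Filter.eventually_all_finset]
    exact fun a ha => (hu1 a).eventually_lt_const hδ
  obtain ⟨i, g1, g2, g3, g4, g5⟩ := (e1.and (e2.and (e3.and (e4.and e5)))).exists
  obtain ⟨J, hJ⟩ : ∃ J : ℕ,
      Q * (1 + C) * (1 + ‖tpi A (u i)‖) * K * ((1 / 2 : ℝ) ^ J) ^ 2 < ε / 2 := by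
    have h := (((tendsto_pow_atTop_nhds_zero_of_lt_one (r := (1 / 2 : ℝ)) (by norm_num)
      (by norm_num)).pow 2).const_mul (Q * (1 + C) * (1 + ‖tpi A (u i)‖) * K))
    have h' := h.eventually_lt_const (u := ε / 2) (by simpa using hε)
    exact h'.exists
  obtain ⟨f, hf⟩ := est_total M D hD Q hQ0 hQ δ C K hδ.le hC hK F t ht0 ht hta hat (u i)
    (fun a ha => (g5 a ha).le)
    (fun j => sc1 j _ (by simpa only [smul_sub, smul_mul_assoc] using g2 j))
    (fun j => sc1 j _ (by simpa only [smul_sub, mul_smul_comm] using g1 j))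
    (fun a ha j => sc2 j _ (by
      have := g3 a ha j
      rwa [smul_mul_assoc, ← smul_sub] at this))
    (fun a ha j => sc2 j _ (by
      have := g4 a ha j
      rwa [mul_smul_comm, ← smul_sub] at this)) J
  refine ⟨f, fun a ha => (hf a ha).trans ?_⟩
  have : Q * δ * (1 + 2 * (4 * (1 + C) + 6 * K) + (1 + C)) = R * δ := by rw [hR]; ring
  rw [this]
  linarith

theorem net_atTop_tendsto {Y : Type} [PseudoMetricSpace Y] (g : Finset A × ℕ → A → Y) (l : A → Y)
    (h : ∀ F n, ∀ a ∈ F, dist (g (F, n) a) (l a) ≤ 1 / ((n : ℝ) + 1)) (a : A) :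
    Tendsto (fun i => g i a) atTop (𝓝 (l a)) := by
  rw [Metric.tendsto_nhds]
  intro ε hε
  obtain ⟨N, hN⟩ := exists_nat_one_div_lt hε
  filter_upwards [eventually_ge_atTop (({a} : Finset A), N)] with i hi
  obtain ⟨F, n⟩ := i
  have h1 : a ∈ F := hi.1 (by simp)
  have h2 : N ≤ n := hi.2
  refine (h F n a h1).trans_lt (lt_of_le_of_lt ?_ hN)
  gcongr

theorem amenable_of_pseudo [CompleteSpace A] (hbai : HasBoundedApproxIdentity A)
    (hP : PseudoAmenable A) : ApproximatelyAmenable A := by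
  classical
  intro X _ _ M D hD
  have h : ∀ i : Finset A × ℕ, ∃ f, ∀ a ∈ i.1, ‖(M.dual.l a f - M.dual.r a f) - D a‖ ≤
      1 / ((i.2 : ℝ) + 1) := fun i =>
    approxInner_of_pseudo hbai hP M.dual D hD i.1 _ (by positivity)
  choose x hx using h
  refine ⟨Finset A × ℕ, atTop, x, inferInstance, fun a => ?_⟩
  exact net_atTop_tendsto (fun i a => M.dual.l a (x i) - M.dual.r a (x i)) D
    (fun F n a ha => by rw [dist_eq_norm]; exact hx (F, n) a ha) a
end P3

open Filter Topology TensorProduct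
set_option linter.unusedSectionVars false
section P4

theorem hb_sub {Z : Type} [SeminormedAddCommGroup Z] [NormedSpace ℂ Z] (S : Submodule ℂ Z) (z : Z)
    (ε : ℝ) (hε : 0 < ε) (h : ∀ s ∈ S, ε ≤ ‖s - z‖) :
    ∃ f : Z →L[ℂ] ℂ, (∀ s ∈ S, f s = 0) ∧ f z ≠ 0 := by
  have hz : z ∉ closure (S : Set Z) := by
    intro hz
    obtain ⟨s, hs, hd⟩ := Metric.mem_closure_iff.1 hz ε hε
    rw [dist_comm, dist_eq_norm] at hd
    exact absurd hd (not_lt.2 (h s hs))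
  have hconv : Convex ℝ (S : Set Z) := (S.restrictScalars ℝ).convex
  obtain ⟨f, u, h1, h2⟩ := RCLike.geometric_hahn_banach_closed_point (𝕜 := ℂ)
    hconv.closure isClosed_closure hz
  have h1' : ∀ s ∈ S, (f s).re < u := fun s hs => h1 s (subset_closure hs)
  have hu : 0 < u := by simpa using h1' 0 S.zero_mem
  have hre : ∀ s ∈ S, (f s).re = 0 := by
    intro s hs
    by_contra hne
    have := h1' (((u / (f s).re : ℝ) : ℂ) • s) (S.smul_mem _ hs)
    rw [map_smul, smul_eq_mul, Complex.re_ofReal_mul, div_mul_cancel₀ _ hne] at this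
    exact lt_irrefl _ this
  refine ⟨f, fun s hs => ?_, fun h0 => ?_⟩
  · apply Complex.ext
    · simpa using hre s hs
    · have := hre (Complex.I • s) (S.smul_mem _ hs)
      rw [map_smul, smul_eq_mul] at this
      simpa using this
  · rw [h0] at h2
    simp at h2
    linarith

variable (A : Type) [NonUnitalNormedRing A] [NormedSpace ℂ A]
  [IsScalarTower ℂ A A] [SMulCommClass ℂ A A]

theorem paSN_neg {A : Type} [NonUnitalNormedRing A] [NormedSpace ℂ A]
    [IsScalarTower ℂ A A] [SMulCommClass ℂ A A] (t : A ⊗[ℂ] A) : paSN (-t) = paSN t := by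
  have h : ∀ s : A ⊗[ℂ] A, paSN (-s) ≤ paSN s := fun s => by
    have := paSN_smul_le (-1 : ℂ) s
    simpa using this
  refine le_antisymm (h t) ?_
  have := h (-t)
  rwa [neg_neg] at this

/-- `A ⊗ A` with the projective seminorm. -/
def PTs : Type := A ⊗[ℂ] A

noncomputable instance : AddCommGroup (PTs A) := inferInstanceAs (AddCommGroup (A ⊗[ℂ] A))

noncomputable instance : Module ℂ (PTs A) := inferInstanceAs (Module ℂ (A ⊗[ℂ] A))

noncomputable def ptsSN : AddGroupSeminorm (PTs A) where
  toFun := fun t => paSN (A := A) t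
  map_zero' := paSN_zero
  add_le' := paSN_add
  neg' := paSN_neg

noncomputable instance : SeminormedAddCommGroup (PTs A) :=
  { (ptsSN A).toSeminormedAddCommGroup with
    toAddCommGroup := inferInstanceAs (AddCommGroup (PTs A)) }

theorem pts_norm (t : PTs A) : ‖t‖ = paSN (A := A) t := rfl

noncomputable instance : NormedSpace ℂ (PTs A) where
  norm_smul_le c t := paSN_smul_le c t

variable {A}

theorem separate (F : Finset A) (ε : ℝ) (hε : 0 < ε)
    (h : ∀ u : A ⊗[ℂ] A, ¬ ((∀ a ∈ F, paSN (tactL A a u - tactR A a u) < ε) ∧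
      ∀ a ∈ F, ‖tpi A u * a - a‖ < ε)) :
    ∃ (f : F → (A →L[ℂ] A →L[ℂ] ℂ)) (g : F → (A →L[ℂ] ℂ)),
      (∀ x y, ∑ a : F, (f a (a * x) y - f a x (y * a) + g a (x * y * a)) = 0) ∧
      ∑ a : F, g a a ≠ 0 := by
  classical
  let Θ : A ⊗[ℂ] A →ₗ[ℂ] ((F → PTs A) × (F → A)) :=
    { toFun := fun u => (fun a => (tactL A (a : A) u - tactR A (a : A) u : A ⊗[ℂ] A),
        fun a => tpi A u * (a : A))
      map_add' := fun u v => by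
        refine Prod.ext (funext fun a => ?_) (funext fun a => ?_)
        · change (tactL A (a : A) (u + v) - tactR A (a : A) (u + v) : A ⊗[ℂ] A) =
            (tactL A (a : A) u - tactR A (a : A) u) + (tactL A (a : A) v - tactR A (a : A) v)
          rw [map_add, map_add]; abel
        · change tpi A (u + v) * (a : A) = tpi A u * (a : A) + tpi A v * (a : A)
          rw [map_add, add_mul]
      map_smul' := fun c u => by
        refine Prod.ext (funext fun a => ?_) (funext fun a => ?_)
        · change (tactL A (a : A) (c • u) - tactR A (a : A) (c • u) : A ⊗[ℂ] A) =
            c • (tactL A (a : A) u - tactR A (a : A) u)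
          rw [map_smul, map_smul, smul_sub]
        · change tpi A (c • u) * (a : A) = c • (tpi A u * (a : A))
          rw [map_smul, smul_mul_assoc] }
  obtain ⟨Λ, hΛ0, hΛ⟩ := hb_sub (LinearMap.range Θ) ((0 : F → PTs A), fun a : F => (a : A)) ε hε (by
    rintro _ ⟨u, rfl⟩
    by_contra hlt
    rw [not_le] at hlt
    have hn1 := lt_of_le_of_lt (norm_fst_le _) hlt
    have hn2 := lt_of_le_of_lt (norm_snd_le _) hlt
    rw [pi_norm_lt_iff hε] at hn1 hn2
    refine h u ⟨fun a ha => ?_, fun a ha => ?_⟩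
    · have := hn1 ⟨a, ha⟩
      rw [Prod.fst_sub, sub_zero] at this
      exact this
    · exact hn2 ⟨a, ha⟩)
  let f0 : F → (A →ₗ[ℂ] A →ₗ[ℂ] ℂ) := fun a =>
    (TensorProduct.mk ℂ A A).compr₂
      ((Λ.toLinearMap ∘ₗ LinearMap.inl ℂ _ _) ∘ₗ
        (LinearMap.single ℂ (fun _ : F => PTs A) a : PTs A →ₗ[ℂ] (F → PTs A)))
  have hf0 : ∀ a x y, f0 a x y = Λ (Pi.single a (x ⊗ₜ[ℂ] y : A ⊗[ℂ] A), 0) := fun a x y => rfl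
  have hsing : ∀ (a : F) (t : PTs A), ‖(Pi.single a t : F → PTs A)‖ ≤ ‖t‖ := by
    intro a t
    rw [pi_norm_le_iff_of_nonneg (norm_nonneg _)]
    intro b
    by_cases hb : b = a
    · subst hb
      rw [Pi.single_eq_same]
    · rw [Pi.single_eq_of_ne hb, norm_zero]
      exact norm_nonneg _
  let f : F → (A →L[ℂ] A →L[ℂ] ℂ) := fun a => (f0 a).mkContinuous₂ ‖Λ‖ (fun x y => by
    rw [hf0]
    refine (Λ.le_opNorm _).trans ?_
    rw [mul_assoc]
    gcongr
    rw [Prod.norm_def, norm_zero, max_eq_left (norm_nonneg _)]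
    exact (hsing a _).trans (paSN_tmul x y))
  let g : F → (A →L[ℂ] ℂ) := fun a =>
    (Λ.comp (ContinuousLinearMap.inr ℂ (F → PTs A) (F → A))).comp
      (ContinuousLinearMap.single ℂ (fun _ : F => A) a)
  have hg : ∀ a x, g a x = Λ (0, Pi.single a x) := fun a x => rfl
  have hf : ∀ a x y, f a x y = Λ (Pi.single a (x ⊗ₜ[ℂ] y : A ⊗[ℂ] A), 0) := fun a x y => rfl
  have dec1 : ∀ w : F → PTs A, Λ (w, 0) = ∑ a, Λ (Pi.single a (w a), 0) := by
    intro w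
    conv_lhs => rw [← Finset.univ_sum_single w]
    exact map_sum (Λ.toLinearMap ∘ₗ LinearMap.inl ℂ (F → PTs A) (F → A)) _ _
  have dec2 : ∀ v : F → A, Λ (0, v) = ∑ a, Λ (0, Pi.single a (v a)) := by
    intro v
    conv_lhs => rw [← Finset.univ_sum_single v]
    exact map_sum (Λ.toLinearMap ∘ₗ LinearMap.inr ℂ (F → PTs A) (F → A)) _ _
  refine ⟨f, g, fun x y => ?_, ?_⟩
  · have h1 := hΛ0 (Θ (x ⊗ₜ y)) ⟨_, rfl⟩
    have h2 : Θ (x ⊗ₜ y) = ((Θ (x ⊗ₜ y)).1, 0) + (0, (Θ (x ⊗ₜ y)).2) := by simp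
    rw [h2, map_add, dec1, dec2, ← Finset.sum_add_distrib] at h1
    rw [← h1]
    refine Finset.sum_congr rfl fun a _ => ?_
    have e1 : (Θ (x ⊗ₜ y)).1 a = (((a : A) * x) ⊗ₜ[ℂ] y - x ⊗ₜ[ℂ] (y * (a : A)) : A ⊗[ℂ] A) := by
      change (tactL A (a : A) (x ⊗ₜ y) - tactR A (a : A) (x ⊗ₜ y) : A ⊗[ℂ] A) = _
      simp [tactL, tactR]
    have e2 : (Θ (x ⊗ₜ y)).2 a = x * y * a := by
      change tpi A (x ⊗ₜ y) * (a : A) = _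
      simp [tpi]
    rw [e1, e2, hf, hf, hg]
    congr 1
    rw [← map_sub]
    congr 1
    refine Prod.ext ?_ (by simp)
    exact (Pi.single_sub (f := fun _ : F => PTs A) a _ _).symm
  · rw [dec2] at hΛ
    exact hΛ

theorem exists_E (hbai : HasBoundedApproxIdentity A) :
    ∃ E : (A →L[ℂ] ℂ) →L[ℂ] ℂ, ∀ (a : A) (h k : A →L[ℂ] ℂ),
      ((∀ x, k x = h (a * x)) → E k = h a) ∧ ((∀ x, k x = h (x * a)) → E k = h a) := by
  obtain ⟨ι, φ, e, hφ, ⟨C, he⟩, hea⟩ := hbai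
  let 𝒰 : Ultrafilter ι := Ultrafilter.of φ
  have h𝒰 : (𝒰 : Filter ι) ≤ φ := Ultrafilter.of_le φ
  let ev : ι → WeakDual ℂ (A →L[ℂ] ℂ) := fun i =>
    StrongDual.toWeakDual (NormedSpace.inclusionInDoubleDual ℂ A (e i))
  have hc := WeakDual.isCompact_closedBall (𝕜 := ℂ) (E := A →L[ℂ] ℂ) 0 C
  obtain ⟨E, -, hE⟩ := hc.ultrafilter_le_nhds (𝒰.map ev) (by
    rw [Filter.le_principal_iff]
    rw [Ultrafilter.coe_map, Filter.mem_map]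
    refine Filter.univ_mem' fun i => ?_
    have key : ∀ ψ : StrongDual ℂ (StrongDual ℂ A), ‖ψ‖ ≤ C → dist ψ 0 ≤ C := by
      intro ψ h
      have h2 := @dist_zero_right (StrongDual ℂ (StrongDual ℂ A))
        (@ContinuousLinearMap.toSeminormedAddCommGroup ℂ ℂ (StrongDual ℂ A) ℂ _ _ _ _ _ _
          (RingHom.id ℂ)).toSeminormedAddGroup ψ
      exact h2.le.trans h
    exact key _ ((NormedSpace.double_dual_bound ℂ A (e i)).trans (he i)))
  have hE' : Tendsto ev 𝒰 (𝓝 E) := hE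
  have lim : ∀ h : A →L[ℂ] ℂ, Tendsto (fun i => h (e i)) 𝒰 (𝓝 (WeakDual.toStrongDual E h)) := by
    intro h
    have := ((WeakDual.eval_continuous (𝕜 := ℂ) h).tendsto E).comp hE'
    exact this
  refine ⟨WeakDual.toStrongDual E, fun a h k => ⟨fun hk => ?_, fun hk => ?_⟩⟩
  · refine tendsto_nhds_unique (lim k) ?_
    simp only [hk]
    exact (h.continuous.tendsto a).comp ((hea a).2.mono_left h𝒰)
  · refine tendsto_nhds_unique (lim k) ?_
    simp only [hk]
    exact (h.continuous.tendsto a).comp ((hea a).1.mono_left h𝒰)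
end P4

open Filter Topology TensorProduct
set_option linter.unusedSectionVars false
section P5
set_option maxSynthPendingDepth 8
set_option synthInstance.maxHeartbeats 400000
set_option maxHeartbeats 1000000
variable {A : Type} [NonUnitalNormedRing A] [NormedSpace ℂ A]
  [IsScalarTower ℂ A A] [SMulCommClass ℂ A A]

variable (A) in
/-- Hochschild-type cocycles among trilinear forms. -/
def triX : Submodule ℂ ((A →L[ℂ] A →L[ℂ] A →L[ℂ] ℂ)) where
  carrier := {T | ∀ x y z w, T (x * y) z w - T x (y * z) w + T x y (z * w) = 0}
  zero_mem' := by intro x y z w; simp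
  add_mem' := by
    intro S T hS hT x y z w
    have h1 := hS x y z w
    have h2 := hT x y z w
    simp only [add_apply]
    linear_combination h1 + h2
  smul_mem' := by
    intro c T hT x y z w
    have h1 := hT x y z w
    simp only [smul_apply, smul_eq_mul]
    linear_combination c * h1

/-- right action -/
noncomputable def triR : A →L[ℂ] (A →L[ℂ] A →L[ℂ] A →L[ℂ] ℂ) →L[ℂ] (A →L[ℂ] A →L[ℂ] A →L[ℂ] ℂ) :=
  (ContinuousLinearMap.compL ℂ A A (A →L[ℂ] A →L[ℂ] ℂ)).flip.comp (ContinuousLinearMap.mul ℂ A)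

/-- left action -/
noncomputable def triL : A →L[ℂ] (A →L[ℂ] A →L[ℂ] A →L[ℂ] ℂ) →L[ℂ] (A →L[ℂ] A →L[ℂ] A →L[ℂ] ℂ) :=
  (ContinuousLinearMap.compL ℂ A (A →L[ℂ] A →L[ℂ] ℂ) (A →L[ℂ] A →L[ℂ] ℂ)).comp
    ((ContinuousLinearMap.compL ℂ A (A →L[ℂ] ℂ) (A →L[ℂ] ℂ)).comp
      ((ContinuousLinearMap.compL ℂ A A ℂ).flip.comp (ContinuousLinearMap.mul ℂ A).flip))

@[simp] theorem triR_apply (a : A) (T : (A →L[ℂ] A →L[ℂ] A →L[ℂ] ℂ)) (x y z : A) : triR a T x y z = T (a * x) y z := rfl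
@[simp] theorem triL_apply (a : A) (T : (A →L[ℂ] A →L[ℂ] A →L[ℂ] ℂ)) (x y z : A) : triL a T x y z = T x y (z * a) := rfl

/-- restriction of an operator to the cocycles -/
noncomputable def triRes (B : (A →L[ℂ] A →L[ℂ] A →L[ℂ] ℂ) →L[ℂ] (A →L[ℂ] A →L[ℂ] A →L[ℂ] ℂ)) (h : ∀ T ∈ triX A, B T ∈ triX A) :
    triX A →L[ℂ] triX A :=
  (B.comp (triX A).subtypeL).codRestrict (triX A) (fun T => h T T.2)

theorem triRes_norm (B : (A →L[ℂ] A →L[ℂ] A →L[ℂ] ℂ) →L[ℂ] (A →L[ℂ] A →L[ℂ] A →L[ℂ] ℂ)) (h : ∀ T ∈ triX A, B T ∈ triX A) :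
    ‖triRes B h‖ ≤ ‖B‖ :=
  ContinuousLinearMap.opNorm_le_bound _ (norm_nonneg _) (fun T => B.le_opNorm T)

theorem triR_mem (a : A) (T : (A →L[ℂ] A →L[ℂ] A →L[ℂ] ℂ)) (hT : T ∈ triX A) : triR a T ∈ triX A := by
  intro x y z w
  have := hT (a * x) y z w
  simpa only [triR_apply, mul_assoc] using this

theorem triL_mem (a : A) (T : (A →L[ℂ] A →L[ℂ] A →L[ℂ] ℂ)) (hT : T ∈ triX A) : triL a T ∈ triX A := by
  intro x y z w
  have := hT x y z (w * a)
  simpa only [triL_apply, mul_assoc] using this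

theorem triX_ext {S T : triX A} (h : ∀ x y z, S.1 x y z = T.1 x y z) : S = T := by
  apply Subtype.ext
  ext x y z
  exact h x y z

variable (A) in
/-- the bimodule of cocycles -/
noncomputable def triM : BanachBimod A (triX A) where
  l a := triRes (triL a) (triL_mem a)
  r a := triRes (triR a) (triR_mem a)
  l_add a b := by
    ext1 T; apply triX_ext; intro x y z
    change triL (a + b) T.1 x y z = triL a T.1 x y z + triL b T.1 x y z
    simp only [map_add, add_apply]
  l_smul c a := by
    ext1 T; apply triX_ext; intro x y z
    change triL (c • a) T.1 x y z = c • triL a T.1 x y z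
    simp only [map_smul, smul_apply]
  r_add a b := by
    ext1 T; apply triX_ext; intro x y z
    change triR (a + b) T.1 x y z = triR a T.1 x y z + triR b T.1 x y z
    simp only [map_add, add_apply]
  r_smul c a := by
    ext1 T; apply triX_ext; intro x y z
    change triR (c • a) T.1 x y z = c • triR a T.1 x y z
    simp only [map_smul, smul_apply]
  l_bound := ⟨‖(triL : A →L[ℂ] (A →L[ℂ] A →L[ℂ] A →L[ℂ] ℂ) →L[ℂ] (A →L[ℂ] A →L[ℂ] A →L[ℂ] ℂ))‖,
    fun a => (triRes_norm _ _).trans (ContinuousLinearMap.le_opNorm _ _)⟩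
  r_bound := ⟨‖(triR : A →L[ℂ] (A →L[ℂ] A →L[ℂ] A →L[ℂ] ℂ) →L[ℂ] (A →L[ℂ] A →L[ℂ] A →L[ℂ] ℂ))‖,
    fun a => (triRes_norm _ _).trans (ContinuousLinearMap.le_opNorm _ _)⟩
  l_mul a b := by
    ext1 T; apply triX_ext; intro x y z
    change T.1 x y (z * (a * b)) = T.1 x y (z * a * b)
    rw [mul_assoc]
  r_mul a b := by
    ext1 T; apply triX_ext; intro x y z
    change T.1 (a * b * x) y z = T.1 (a * (b * x)) y z
    rw [mul_assoc]
  lr_comm a b := by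
    ext1 T; apply triX_ext; intro x y z
    rfl

/-- the functional `T ↦ (a ↦ E_x E_z T(x,a,z))` -/
noncomputable def triG (E : (A →L[ℂ] ℂ) →L[ℂ] ℂ) : (A →L[ℂ] A →L[ℂ] A →L[ℂ] ℂ) →L[ℂ] A →L[ℂ] ℂ :=
  (ContinuousLinearMap.compL ℂ A (A →L[ℂ] A →L[ℂ] ℂ) ℂ
    (E.comp (ContinuousLinearMap.compL ℂ A (A →L[ℂ] ℂ) ℂ E))).comp
    (ContinuousLinearMap.flipₗᵢ ℂ A A (A →L[ℂ] ℂ)).toContinuousLinearEquiv.toContinuousLinearMap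

theorem triG_apply (E : (A →L[ℂ] ℂ) →L[ℂ] ℂ) (T : (A →L[ℂ] A →L[ℂ] A →L[ℂ] ℂ)) (a : A) :
    triG E T a = E (E.comp (T.flip a)) := rfl

/-- the derivation -/
noncomputable def triD (E : (A →L[ℂ] ℂ) →L[ℂ] ℂ) : A →L[ℂ] (triX A →L[ℂ] ℂ) :=
  ((triG E).comp (triX A).subtypeL).flip

theorem triD_apply (E : (A →L[ℂ] ℂ) →L[ℂ] ℂ) (T : triX A) (a : A) :
    triD E a T = E (E.comp (T.1.flip a)) := rfl

theorem triD_deriv (E : (A →L[ℂ] ℂ) →L[ℂ] ℂ)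
    (hE : ∀ (a : A) (h k : A →L[ℂ] ℂ),
      ((∀ x, k x = h (a * x)) → E k = h a) ∧ ((∀ x, k x = h (x * a)) → E k = h a)) :
    (triM A).dual.IsDerivation (triD E) := by
  intro a b
  ext T
  change triD E (a * b) T = triD E b ((triM A).r a T) + triD E a ((triM A).l b T)
  simp only [triD_apply]
  have e1 : E (E.comp (((triM A).r a T).1.flip b)) = E (T.1 a b) :=
    (hE a (E.comp (T.1.flip b)) _).1 (fun x => rfl)
  have e2 : E.comp (((triM A).l b T).1.flip a) = (T.1.flip a).flip b := by
    ext x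
    exact (hE b (T.1 x a) _).2 (fun z => rfl)
  let k1 : A →L[ℂ] ℂ := (E.comp (T.1.flip b)).comp ((ContinuousLinearMap.mul ℂ A).flip a)
  have e3 : E k1 = E (T.1 a b) := (hE a (E.comp (T.1.flip b)) k1).2 (fun x => rfl)
  have e4 : E.comp (T.1.flip (a * b)) = k1 + (T.1.flip a).flip b := by
    ext x
    change E (T.1 x (a * b)) = E (T.1 (x * a) b) + T.1 x a b
    let k2 : A →L[ℂ] ℂ := (T.1 x a).comp (ContinuousLinearMap.mul ℂ A b)
    have e5 : E k2 = T.1 x a b := (hE b (T.1 x a) k2).1 (fun z => rfl)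
    have e6 : T.1 x (a * b) = T.1 (x * a) b + k2 := by
      ext z
      have := T.2 x a b z
      change T.1 x (a * b) z = T.1 (x * a) b z + T.1 x a (b * z)
      linear_combination -this
    rw [e6, map_add, e5]
  rw [e1, e2, e4, map_add, e3]

/-- coboundary of a bilinear form -/
noncomputable def triB (f : A →L[ℂ] A →L[ℂ] ℂ) : (A →L[ℂ] A →L[ℂ] A →L[ℂ] ℂ) :=
  (ContinuousLinearMap.compL ℂ A A (A →L[ℂ] ℂ) f).comp (ContinuousLinearMap.mul ℂ A) -
  ((ContinuousLinearMap.compL ℂ A (A →L[ℂ] A) (A →L[ℂ] ℂ)).flip (ContinuousLinearMap.mul ℂ A)).comp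
    ((ContinuousLinearMap.compL ℂ A A ℂ).comp f)

theorem triB_apply (f : A →L[ℂ] A →L[ℂ] ℂ) (x y z : A) :
    triB f x y z = f (x * y) z - f x (y * z) := rfl

/-- coboundary as an element of the cocycles -/
noncomputable def triBX (f : A →L[ℂ] A →L[ℂ] ℂ) : triX A :=
  ⟨triB f, by
    intro x y z w
    simp only [triB_apply, mul_assoc]
    ring⟩

theorem triD_triBX (E : (A →L[ℂ] ℂ) →L[ℂ] ℂ)
    (hE : ∀ (a : A) (h k : A →L[ℂ] ℂ),
      ((∀ x, k x = h (a * x)) → E k = h a) ∧ ((∀ x, k x = h (x * a)) → E k = h a))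
    (f : A →L[ℂ] A →L[ℂ] ℂ) (a : A) :
    triD E a (triBX f) = E (f a) - E (f.flip a) := by
  rw [triD_apply]
  let k1 : A →L[ℂ] ℂ := (E.comp f).comp ((ContinuousLinearMap.mul ℂ A).flip a)
  have e1 : E k1 = E (f a) := (hE a (E.comp f) k1).2 (fun x => rfl)
  have e2 : E.comp ((triBX f).1.flip a) = k1 - f.flip a := by
    ext x
    let k2 : A →L[ℂ] ℂ := (f x).comp (ContinuousLinearMap.mul ℂ A a)
    have e5 : E k2 = f x a := (hE a (f x) k2).1 (fun z => rfl)
    change E (triB f x a) = E (f (x * a)) - f x a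
    have e6 : triB f x a = f (x * a) - k2 := by
      ext z; rfl
    rw [e6, map_sub, e5]
  rw [e2, map_sub, e1]

theorem approx_sum_zero {X : Type} [NormedAddCommGroup X] [NormedSpace ℂ X] (M : BanachBimod A X)
    (D : A →L[ℂ] (X →L[ℂ] ℂ)) (h : M.dual.ApproxInner D) (F : Finset A) (t : F → X)
    (hrel : ∑ a : F, (M.r a (t a) - M.l a (t a)) = 0) : ∑ a : F, D a (t a) = 0 := by
  obtain ⟨ι, φ, ξ, hφ, hξ⟩ := h
  have hlim : Tendsto (fun i => ∑ a : F,
      (M.dual.l a (ξ i) - M.dual.r a (ξ i)) (t a)) φ (𝓝 (∑ a : F, D a (t a))) := by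
    refine tendsto_finsetSum _ fun a _ => ?_
    exact ((ContinuousLinearMap.apply ℂ ℂ (t a)).continuous.tendsto _).comp (hξ a)
  have hz : ∀ i, ∑ a : F, (M.dual.l a (ξ i) - M.dual.r a (ξ i)) (t a) = 0 := by
    intro i
    have := congrArg (ξ i) hrel
    rw [map_sum, map_zero] at this
    rw [← this]
    refine Finset.sum_congr rfl fun a _ => ?_
    rw [map_sub]
    rfl
  simp only [hz] at hlim
  exact tendsto_nhds_unique hlim tendsto_const_nhds

theorem pseudo_step (hbai : HasBoundedApproxIdentity A) (hA : ApproximatelyAmenable A)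
    (F : Finset A) (ε : ℝ) (hε : 0 < ε) :
    ∃ u : A ⊗[ℂ] A, (∀ a ∈ F, paSN (tactL A a u - tactR A a u) < ε) ∧
      ∀ a ∈ F, ‖tpi A u * a - a‖ < ε := by
  by_contra hcon
  obtain ⟨f, g, hfg, hne⟩ := separate F ε hε (fun u hu => hcon ⟨u, hu⟩)
  obtain ⟨E, hE⟩ := exists_E hbai
  have hI := hA _ _ _ (triM A) (triD E) (triD_deriv E hE)
  have hrel : ∑ a : F, ((triM A).r a (triBX (f a)) - (triM A).l a (triBX (f a))) = 0 := by
    apply triX_ext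
    intro x y z
    have h1 := hfg (x * y) z
    have h2 := hfg x (y * z)
    change _ = (0 : ℂ)
    rw [← sub_eq_zero.2 (h1.trans h2.symm), ← Finset.sum_sub_distrib]
    rw [Submodule.coe_sum]
    simp only [sum_apply]
    refine Finset.sum_congr rfl fun a _ => ?_
    change (f a (a * x * y) z - f a (a * x) (y * z)) - (f a (x * y) (z * a) - f a x (y * (z * a)))
      = _
    simp only [mul_assoc]
    ring
  have hD := approx_sum_zero (triM A) (triD E) hI F (fun a => triBX (f a)) hrel
  simp only [triD_triBX E hE] at hD
  -- apply `E` to the relation in both variables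
  have s1 : ∀ x : A, ∑ a : F, (E (f a (a * x)) - f a x a + g a (x * a)) = 0 := by
    intro x
    let k : F → (A →L[ℂ] ℂ) := fun a => (f a x).comp ((ContinuousLinearMap.mul ℂ A).flip a)
    let m : F → (A →L[ℂ] ℂ) := fun a => (g a).comp
      (((ContinuousLinearMap.mul ℂ A).flip a).comp (ContinuousLinearMap.mul ℂ A x))
    have hk : ∀ a, E (k a) = f a x a := fun a => (hE a (f a x) (k a)).2 (fun z => rfl)
    have hm : ∀ a, E (m a) = g a (x * a) := by
      intro a
      refine (hE (a : A) ((g a).comp (ContinuousLinearMap.mul ℂ A x)) (m a)).2 (fun z => ?_)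
      change g a (x * z * a) = g a (x * (z * a))
      rw [mul_assoc]
    have h0 : ∑ a : F, (f a (a * x) - k a + m a) = 0 := by
      ext y
      rw [sum_apply]
      exact hfg x y
    have h1 := congrArg E h0
    rw [map_sum, map_zero] at h1
    simpa only [map_add, map_sub, hk, hm] using h1
  have s2 : ∑ a : F, (E (f a a) - E ((f a).flip a) + g a a) = 0 := by
    let k : F → (A →L[ℂ] ℂ) := fun a => (E.comp (f a)).comp (ContinuousLinearMap.mul ℂ A a)
    let m : F → (A →L[ℂ] ℂ) := fun a => (g a).comp ((ContinuousLinearMap.mul ℂ A).flip a)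
    have hk : ∀ a, E (k a) = E (f a a) := fun a => (hE a (E.comp (f a)) (k a)).1 (fun z => rfl)
    have hm : ∀ a, E (m a) = g a a := fun a => (hE a (g a) (m a)).2 (fun z => rfl)
    have h0 : ∑ a : F, (k a - (f a).flip a + m a) = 0 := by
      ext x
      rw [sum_apply]
      exact s1 x
    have h1 := congrArg E h0
    rw [map_sum, map_zero] at h1
    simpa only [map_add, map_sub, hk, hm] using h1
  rw [Finset.sum_add_distrib, hD, zero_add] at s2
  exact hne s2

theorem pseudo_of_amenable (hbai : HasBoundedApproxIdentity A) (hA : ApproximatelyAmenable A) :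
    PseudoAmenable A := by
  classical
  have H : ∀ i : Finset A × ℕ, ∃ u : A ⊗[ℂ] A,
      (∀ a ∈ i.1, paSN (tactL A a u - tactR A a u) < 1 / ((i.2 : ℝ) + 1)) ∧
      ∀ a ∈ i.1, ‖tpi A u * a - a‖ < 1 / ((i.2 : ℝ) + 1) :=
    fun i => pseudo_step hbai hA i.1 _ Nat.one_div_pos_of_nat
  choose u hu1 hu2 using H
  refine ⟨Finset A × ℕ, atTop, u, inferInstance, ?_, ?_⟩
  · refine net_atTop_tendsto (fun i a => paSN (tactL A a (u i) - tactR A a (u i))) (fun _ => 0) ?_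
    intro F n a ha
    rw [Real.dist_eq, sub_zero, abs_of_nonneg (paSN_nonneg _)]
    exact (hu1 (F, n) a ha).le
  · refine net_atTop_tendsto (fun i a => ‖tpi A (u i) * a - a‖) (fun _ => 0) ?_
    intro F n a ha
    rw [Real.dist_eq, sub_zero, abs_of_nonneg (norm_nonneg _)]
    exact (hu2 (F, n) a ha).le
end P5

/-- A Banach algebra `A` with a bounded approximate identity is approximately
amenable if and only if it is pseudo-amenable. -/
theorem approxAmenable_iff_pseudoAmenable_of_bai
    (A : Type) [NonUnitalNormedRing A] [NormedSpace ℂ A]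
    [IsScalarTower ℂ A A] [SMulCommClass ℂ A A] [CompleteSpace A]
    (hbai : HasBoundedApproxIdentity A) :
    ApproximatelyAmenable A ↔ PseudoAmenable A := by
  exact ⟨pseudo_of_amenable hbai, amenable_of_pseudo hbai⟩
end
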